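/- arXiv:2111.08780 — 3 statements merged into one kernel-verified Lean document; each statement's English description precedes it below -/
import Mathlib

section
/- There is a universal constant C > 0 such that for every real r ∈ (0, 1/2], setting h = ⌊1/(2r)⌋ and ε = h + 1 − 1/(2r), there exist infinitely many positive integers N for which some ORN design on N nodes guarantees throughput r and has maximum latency at most C · h · ((εN)^{1/h} + N^{1/(h+1)}). -/
/-!
Identify the nodes with the vectors of `V = K ^ d` for a prime field `K` with `p` elements, and let
`M` be the diagonal operator with entries `1, α, α², …` for a primitive root `α`. Time is cut into
phases of `p - 1` slots, and the slots of phase `j` translate by the multiples `s • M ^ j 1` with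
`s ≠ 0`. Travelling a displacement within `Q` consecutive phases amounts to writing it as a
combination of `Q` points of the moment curve, any `d` of which form a basis, with one physical hop
per nonzero coefficient.

Messages travel through a uniformly random intermediate node, so each half of a trip is uniform
whatever the demand. If the coefficients are chosen homogeneously in the displacement, all slots of
a phase are used equally often. Throughput `r` is therefore guaranteed once the average number of
nonzero coefficients is at most `1 / (2 r) = h + 1 - ε`.

If `ε ≥ 1 / 4`, take `d = Q = h`. The latency is then about `2 h p`, which is `O(h (ε N) ^ (1 / h))`
for `N = p ^ h`. If `ε < 1 / 4`, take `d = h + 1`. The displacements with only `h` nonzero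
coefficients fill `B = C(Q, h)` distinct hyperplanes, and since distinct hyperplanes meet in
codimension two, the Cauchy–Schwarz inequality gives their union density at least `B / (p + B)`.
This is at least `ε` when `p` is between `B / (4 ε)` and `B / (2 ε)`, where Bertrand's postulate
provides a prime. From `B ≥ ((Q + 1 - h) / h) ^ h` one gets `p Q = O(h (ε N) ^ (1 / h))` for
`N = p ^ (h + 1)`.
-/

open scoped ENNReal

/-- A connection schedule of size `N` and period `T`: a `T`-periodic sequence of
permutations of `[N]`, indexed by timeslots `t : ℤ`. -/
structure ConnSched (N T : ℕ) where
  Tpos : 0 < T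
  perm : ℤ → Equiv.Perm (Fin N)
  periodic : ∀ t : ℤ, perm (t + T) = perm t

/-- A path in the virtual topology, encoded by its starting vertex together with the
list of its steps, where `true` denotes traversing the (unique) outgoing physical edge
and `false` denotes traversing the virtual edge. -/
structure ORNPath (N : ℕ) where
  start : Fin N × ℤ
  steps : List Bool

namespace ORNPath

variable {N T : ℕ}

/-- One step in the virtual topology: from vertex `v`, either follow the physical edge
(`b = true`) to `(π_t v.1, v.2 + 1)`, or the virtual edge (`b = false`) to `(v.1, v.2+1)`. -/
def stepFn (S : ConnSched N T) (v : Fin N × ℤ) (b : Bool) : Fin N × ℤ :=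
  (if b then S.perm v.2 v.1 else v.1, v.2 + 1)

/-- The final vertex of a path. -/
def dest (S : ConnSched N T) (P : ORNPath N) : Fin N × ℤ :=
  P.steps.foldl (stepFn S) P.start

/-- The latency of a path: the total number of (virtual or physical) edges it contains. -/
def latency (P : ORNPath N) : ℕ := P.steps.length

/-- The number of physical edges of a path. -/
def hops (P : ORNPath N) : ℕ := P.steps.count true

/-- The vertex of a path after `k` steps. -/
def vertexAt (S : ConnSched N T) (P : ORNPath N) (k : ℕ) : Fin N × ℤ :=
  (P.steps.take k).foldl (stepFn S) P.start

/-- A physical edge of the virtual topology is identified by the pair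
(sending node, timeslot); the receiving node is determined by the schedule.
`P.usesEdge S e` says that path `P` traverses the physical edge `e`. -/
def usesEdge (S : ConnSched N T) (P : ORNPath N) (e : Fin N × ℤ) : Prop :=
  ∃ k : Fin P.steps.length, P.steps.get k = true ∧ P.vertexAt S k.val = e

/-- Transpose a path by `s` timeslots. -/
def shift (P : ORNPath N) (s : ℤ) : ORNPath N :=
  ⟨(P.start.1, P.start.2 + s), P.steps⟩

end ORNPath

/-- The amount of flow that `f` sends across the physical edge `e`. -/
noncomputable def edgeFlow {N T : ℕ} (S : ConnSched N T) (f : ORNPath N → ℝ≥0∞)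
    (e : Fin N × ℤ) : ℝ≥0∞ :=
  ∑' P : {P : ORNPath N // P.usesEdge S e}, f P.val

/-- A flow is feasible if it places at most one unit of flow on every physical edge. -/
def Feasible {N T : ℕ} (S : ConnSched N T) (f : ORNPath N → ℝ≥0∞) : Prop :=
  ∀ e : Fin N × ℤ, edgeFlow S f e ≤ 1

/-- An ORN design: a connection schedule together with an oblivious routing scheme.
`route a b t` is a unit flow supported on paths from `(a,t)` to the timeline of `b`,
periodic with period `T`. -/
structure ORNDesign (N T : ℕ) where
  sched : ConnSched N T
  route : Fin N → Fin N → ℤ → ORNPath N → ℝ≥0∞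
  route_support : ∀ a b t P, route a b t P ≠ 0 →
    P.start = (a, t) ∧ (P.dest sched).1 = b
  route_unit : ∀ a b t, ∑' P : ORNPath N, route a b t P = 1
  route_periodic : ∀ a b t P, route a b (t + T) (P.shift T) = route a b t P

/-- A demand function `D` (assigning to each timeslot an `N × N` matrix of nonnegative
reals) requests throughput `r` if all row and column sums of every `D t` are at most `r`. -/
def RequestsThroughput {N : ℕ} (D : ℤ → Fin N → Fin N → ℝ) (r : ℝ) : Prop :=
  (∀ t a b, 0 ≤ D t a b) ∧ (∀ t a, ∑ b, D t a b ≤ r) ∧ (∀ t b, ∑ a, D t a b ≤ r)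

/-- The flow induced by routing the demand `D` with the routing scheme of `R`. -/
noncomputable def inducedFlow {N T : ℕ} (R : ORNDesign N T)
    (D : ℤ → Fin N → Fin N → ℝ) (P : ORNPath N) : ℝ≥0∞ :=
  ∑' x : Fin N × Fin N × ℤ,
    ENNReal.ofReal (D x.2.2 x.1 x.2.1) * R.route x.1 x.2.1 x.2.2 P

/-- An ORN design guarantees throughput `r` if the induced flow is feasible for every
demand function requesting throughput at most `r`. -/
def GuaranteesThroughput {N T : ℕ} (R : ORNDesign N T) (r : ℝ) : Prop :=
  ∀ D : ℤ → Fin N → Fin N → ℝ, RequestsThroughput D r →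
    Feasible R.sched (inducedFlow R D)

/-- The maximum latency of the ORN design `R` is at most `L`: every path carrying a
positive amount of flow has latency at most `L`. -/
def MaxLatencyLE {N T : ℕ} (R : ORNDesign N T) (L : ℕ) : Prop :=
  ∀ a b t P, R.route a b t P ≠ 0 → P.latency ≤ L

open Finset Module

/-! ### Two-stage routing -/

section EdgesOfPaths

variable {N T : ℕ} (S : ConnSched N T)

lemma foldl_stepFn_snd (w : List Bool) (s : Fin N × ℤ) :
    (w.foldl (ORNPath.stepFn S) s).2 = s.2 + w.length := by
  induction w generalizing s with
  | nil => simp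
  | cons b w ih => simp [ih, ORNPath.stepFn]; ring

lemma usesEdge_iff {P : ORNPath N} {e : Fin N × ℤ} :
    P.usesEdge S e ↔ ∃ k, P.steps[k]? = some true ∧ P.vertexAt S k = e := by
  constructor
  · rintro ⟨k, hk, he⟩
    exact ⟨k, by simpa using hk, he⟩
  · rintro ⟨k, hk, he⟩
    obtain ⟨hlt, hk⟩ := List.getElem?_eq_some_iff.1 hk
    exact ⟨⟨k, hlt⟩, hk, he⟩

lemma usesEdge_append {s : Fin N × ℤ} {w w' : List Bool} {e : Fin N × ℤ}
    (h : (ORNPath.mk s (w ++ w')).usesEdge S e) :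
    (ORNPath.mk s w).usesEdge S e ∨
      (ORNPath.mk ((ORNPath.mk s w).dest S) w').usesEdge S e := by
  simp only [usesEdge_iff, ORNPath.vertexAt, ORNPath.dest] at h ⊢
  obtain ⟨k, hk, he⟩ := h
  rcases lt_or_ge k w.length with hlt | hge
  · refine Or.inl ⟨k, by rwa [List.getElem?_append_left hlt] at hk, ?_⟩
    rwa [List.take_append_of_le_length hlt.le] at he
  · refine Or.inr ⟨k - w.length, by rwa [List.getElem?_append_right hge] at hk, ?_⟩
    rwa [List.take_append, List.take_of_length_le hge, List.foldl_append] at he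

variable {S} in
lemma edgeFlow_inducedFlow (R : ORNDesign N T) (D : ℤ → Fin N → Fin N → ℝ) (e : Fin N × ℤ) :
    edgeFlow R.sched (inducedFlow R D) e =
      ∑' t, ∑ a, ∑ b, ENNReal.ofReal (D t a b) * edgeFlow R.sched (R.route a b t) e := by
  simp only [edgeFlow, inducedFlow]
  rw [ENNReal.tsum_comm]
  simp only [ENNReal.tsum_mul_left, ENNReal.tsum_prod', tsum_fintype]
  rw [Summable.tsum_finsetSum fun _ _ => ENNReal.summable]
  refine sum_congr rfl fun a _ => ?_
  rw [Summable.tsum_finsetSum fun _ _ => ENNReal.summable]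

open Classical in
lemma edgeFlow_sum_single {ι : Type*} [Fintype ι] (P : ι → ORNPath N) (x : ℝ≥0∞)
    (e : Fin N × ℤ) :
    edgeFlow S (fun P' => ∑ m, if P' = P m then x else 0) e = #{m | (P m).usesEdge S e} * x := by
  have single (m : ι) : ∑' P' : {P' : ORNPath N // P'.usesEdge S e},
      (if P'.val = P m then x else 0) = if (P m).usesEdge S e then x else 0 := by
    by_cases hm : (P m).usesEdge S e
    · rw [if_pos hm, tsum_eq_single ⟨P m, hm⟩ fun P' hP' => if_neg fun h => hP' (Subtype.ext h),
        if_pos rfl]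
    · rw [if_neg hm, ENNReal.tsum_eq_zero]
      exact fun P' => if_neg fun h : P'.val = P m => hm (h ▸ P'.2)
  rw [edgeFlow, Summable.tsum_finsetSum fun _ _ => ENNReal.summable]
  simp only [single, ← sum_filter, sum_const, nsmul_eq_mul]

open Classical in
lemma exists_eq_of_sum_single_ne_zero {ι : Type*} [Fintype ι] {P : ι → ORNPath N} {x : ℝ≥0∞}
    {P' : ORNPath N} (h : (∑ m, if P' = P m then x else 0) ≠ 0) : ∃ m, P' = P m := by
  obtain ⟨m, -, hm⟩ := exists_ne_zero_of_sum_ne_zero h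
  exact ⟨m, by_contra fun hne => hm (if_neg hne)⟩

end EdgesOfPaths

lemma shift_injective {N : ℕ} (s : ℤ) : Function.Injective fun P : ORNPath N => P.shift s := by
  rintro ⟨⟨a, t⟩, l⟩ ⟨⟨a', t'⟩, l'⟩ h
  simpa [ORNPath.shift] using h

namespace RequestsThroughput

variable {N : ℕ} {D : ℤ → Fin N → Fin N → ℝ} {r : ℝ}

lemma sum_row_ofReal_le (hD : RequestsThroughput D r) (t : ℤ) (a : Fin N) :
    ∑ b, ENNReal.ofReal (D t a b) ≤ ENNReal.ofReal r := by
  rw [← ENNReal.ofReal_sum_of_nonneg fun b _ => hD.1 t a b]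
  exact ENNReal.ofReal_le_ofReal (hD.2.1 t a)

lemma sum_col_ofReal_le (hD : RequestsThroughput D r) (t : ℤ) (b : Fin N) :
    ∑ a, ENNReal.ofReal (D t a b) ≤ ENNReal.ofReal r := by
  rw [← ENNReal.ofReal_sum_of_nonneg fun a _ => hD.1 t a b]
  exact ENNReal.ofReal_le_ofReal (hD.2.2 t b)

end RequestsThroughput

lemma tsum_sum_sum_mul_le {ι κ : Type*} [Fintype ι] [Fintype κ] {d : ℤ → ι → κ → ℝ≥0∞}
    {ρ : ℝ≥0∞} (hd : ∀ t i, ∑ j, d t i j ≤ ρ) (f : ℤ → ι → ℝ≥0∞) :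
    ∑' t, ∑ i, ∑ j, d t i j * f t i ≤ ρ * ∑' t, ∑ i, f t i := by
  rw [← ENNReal.tsum_mul_left]
  refine ENNReal.tsum_le_tsum fun t => ?_
  rw [mul_sum]
  refine sum_le_sum fun i _ => ?_
  rw [← sum_mul]
  gcongr
  exact hd t i

/-- A periodic choice of one path of `L` steps from each vertex `(a, t)` to each vertex
`(b, t + L)`, given by its step list. -/
structure PathSystem {N T : ℕ} (S : ConnSched N T) (L : ℕ) where
  steps : Fin N → Fin N → ℤ → List Bool
  dest_eq : ∀ a b t, (ORNPath.mk (a, t) (steps a b t)).dest S = (b, t + L)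
  steps_periodic : ∀ a b t, steps a b (t + T) = steps a b t

namespace PathSystem

variable {N T L : ℕ} {S : ConnSched N T} (X : PathSystem S L)

/-- The path that the system chooses from `(a, t)` to the timeline of `b`. -/
def path (a b : Fin N) (t : ℤ) : ORNPath N := ⟨(a, t), X.steps a b t⟩

/-- The concatenation of the chosen paths from `(a, t)` to `(m, t + L)` and from there to
`(b, t + 2 * L)`. -/
def twoStagePath (a b : Fin N) (t : ℤ) (m : Fin N) : ORNPath N :=
  ⟨(a, t), X.steps a m t ++ X.steps m b (t + L)⟩

lemma length_steps (a b : Fin N) (t : ℤ) : (X.steps a b t).length = L := by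
  have h := foldl_stepFn_snd S (X.steps a b t) (a, t)
  have hdest := congrArg Prod.snd (X.dest_eq a b t)
  rw [ORNPath.dest] at hdest
  simp only [hdest] at h
  omega

lemma dest_twoStagePath (a b : Fin N) (t : ℤ) (m : Fin N) :
    (X.twoStagePath a b t m).dest S = (b, t + L + L) := by
  have h₁ := X.dest_eq a m t
  have h₂ := X.dest_eq m b (t + L)
  rw [ORNPath.dest] at h₁ h₂
  rw [twoStagePath, ORNPath.dest, List.foldl_append, h₁, h₂]

lemma twoStagePath_shift (a b : Fin N) (t : ℤ) (m : Fin N) :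
    (X.twoStagePath a b t m).shift T = X.twoStagePath a b (t + T) m := by
  simp only [twoStagePath, ORNPath.shift, X.steps_periodic, add_right_comm t (T : ℤ) (L : ℤ)]

lemma usesEdge_twoStagePath {a b : Fin N} {t : ℤ} {m : Fin N} {e : Fin N × ℤ}
    (h : (X.twoStagePath a b t m).usesEdge S e) :
    (X.path a m t).usesEdge S e ∨ (X.path m b (t + L)).usesEdge S e := by
  have := usesEdge_append S h
  rwa [X.dest_eq] at this

open Classical in
/-- Valiant's load balancing: send each message to a uniformly random node `m` and from there to
its destination. -/
noncomputable def twoStageDesign : ORNDesign N T where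
  sched := S
  route a b t P := ∑ m, if P = X.twoStagePath a b t m then (N : ℝ≥0∞)⁻¹ else 0
  route_support a b t P hP := by
    obtain ⟨m, rfl⟩ := exists_eq_of_sum_single_ne_zero hP
    exact ⟨rfl, by rw [dest_twoStagePath]⟩
  route_unit a b t := by
    rw [Summable.tsum_finsetSum fun _ _ => ENNReal.summable]
    simp only [tsum_ite_eq, sum_const, card_univ, Fintype.card_fin, nsmul_eq_mul]
    exact ENNReal.mul_inv_cancel (Nat.cast_ne_zero.2 a.pos.ne') (ENNReal.natCast_ne_top N)
  route_periodic a b t P := by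
    simp only [← twoStagePath_shift, (shift_injective T).eq_iff]

lemma maxLatencyLE_twoStageDesign : MaxLatencyLE X.twoStageDesign (2 * L) := by
  intro a b t P hP
  obtain ⟨m, rfl⟩ := exists_eq_of_sum_single_ne_zero (P := X.twoStagePath a b t) hP
  simp [ORNPath.latency, twoStagePath, length_steps, two_mul]

open Classical in
/-- The number of paths of the system, over all origins, destinations and start times, that
traverse the physical edge `e`. -/
noncomputable def load (e : Fin N × ℤ) : ℝ≥0∞ :=
  ∑' t, ∑ a, (#{b | (X.path a b t).usesEdge S e} : ℝ≥0∞)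

open Classical in
lemma load_eq_sum_dest (e : Fin N × ℤ) :
    X.load e = ∑' t, ∑ b, (#{a | (X.path a b t).usesEdge S e} : ℝ≥0∞) := by
  simp only [load, card_filter, Nat.cast_sum]
  exact tsum_congr fun t => sum_comm

open Classical in
lemma edgeFlow_twoStageDesign_le (a b : Fin N) (t : ℤ) (e : Fin N × ℤ) :
    edgeFlow X.twoStageDesign.sched (X.twoStageDesign.route a b t) e ≤
      (#{m | (X.path a m t).usesEdge S e} + #{m | (X.path m b (t + L)).usesEdge S e}) *
        (N : ℝ≥0∞)⁻¹ := by
  refine (edgeFlow_sum_single S (X.twoStagePath a b t) _ e).trans_le ?_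
  gcongr
  norm_cast
  refine (card_le_card fun m hm => ?_).trans (card_union_le _ _)
  simpa using X.usesEdge_twoStagePath (mem_filter.1 hm).2

/-- The first stage of a trip does not depend on its destination, nor the second on its origin, so
a stage loads `e` by a demand matrix only through its row sums or through its column sums. -/
lemma edgeFlow_inducedFlow_twoStageDesign_le {D : ℤ → Fin N → Fin N → ℝ} {r : ℝ}
    (hD : RequestsThroughput D r) (e : Fin N × ℤ) :
    edgeFlow S (inducedFlow X.twoStageDesign D) e ≤
      2 * ENNReal.ofReal r * X.load e * (N : ℝ≥0∞)⁻¹ := by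
  classical
  set d : ℤ → Fin N → Fin N → ℝ≥0∞ := fun t a b => ENNReal.ofReal (D t a b)
  let fromOrigin (t : ℤ) (a : Fin N) : ℝ≥0∞ := #{m | (X.path a m t).usesEdge S e}
  let toDest (t : ℤ) (b : Fin N) : ℝ≥0∞ := #{m | (X.path m b t).usesEdge S e}
  have first_stage : ∑' t, ∑ a, ∑ b, d t a b * fromOrigin t a ≤ ENNReal.ofReal r * X.load e :=
    tsum_sum_sum_mul_le hD.sum_row_ofReal_le fromOrigin
  have second_stage :
      ∑' t, ∑ a, ∑ b, d t a b * toDest (t + L) b ≤ ENNReal.ofReal r * X.load e := by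
    calc ∑' t, ∑ a, ∑ b, d t a b * toDest (t + L) b
        = ∑' t, ∑ b, ∑ a, d t a b * toDest (t + L) b := tsum_congr fun t => sum_comm
      _ ≤ ENNReal.ofReal r * ∑' t, ∑ b, toDest (t + L) b :=
          tsum_sum_sum_mul_le hD.sum_col_ofReal_le fun t => toDest (t + L)
      _ = ENNReal.ofReal r * X.load e := by
          rw [load_eq_sum_dest]
          congr 1
          exact (Equiv.addRight (L : ℤ)).tsum_eq fun t => ∑ b, toDest t b
  calc edgeFlow S (inducedFlow X.twoStageDesign D) e
      = ∑' t, ∑ a, ∑ b, d t a b *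
          edgeFlow S (X.twoStageDesign.route a b t) e := edgeFlow_inducedFlow X.twoStageDesign D e
    _ ≤ ∑' t, ∑ a, ∑ b, d t a b *
          ((fromOrigin t a + toDest (t + L) b) * (N : ℝ≥0∞)⁻¹) := by
        gcongr with t a _ b _
        exact X.edgeFlow_twoStageDesign_le a b t e
    _ = (∑' t, ∑ a, ∑ b, d t a b * fromOrigin t a +
          ∑' t, ∑ a, ∑ b, d t a b * toDest (t + L) b) * (N : ℝ≥0∞)⁻¹ := by
        simp only [← mul_assoc, ← sum_mul, ENNReal.tsum_mul_right, mul_add, sum_add_distrib,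
          ENNReal.tsum_add]
    _ ≤ (ENNReal.ofReal r * X.load e + ENNReal.ofReal r * X.load e) * (N : ℝ≥0∞)⁻¹ := by
        gcongr
    _ = 2 * ENNReal.ofReal r * X.load e * (N : ℝ≥0∞)⁻¹ := by ring

theorem guaranteesThroughput_twoStageDesign {r : ℝ}
    (hload : ∀ e, 2 * ENNReal.ofReal r * X.load e ≤ N) :
    GuaranteesThroughput X.twoStageDesign r := by
  intro D hD e
  calc edgeFlow S (inducedFlow X.twoStageDesign D) e
      ≤ 2 * ENNReal.ofReal r * X.load e * (N : ℝ≥0∞)⁻¹ :=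
        X.edgeFlow_inducedFlow_twoStageDesign_le hD e
    _ ≤ N * (N : ℝ≥0∞)⁻¹ := by gcongr; exact hload e
    _ ≤ 1 := ENNReal.mul_inv_le_one _

end PathSystem

/-! ### Schedules of translations -/

/-- The step list of length `L` that, started at time `t`, traverses the physical edges in the
timeslots of `A`. -/
def slotSteps (A : Finset ℤ) (t : ℤ) (L : ℕ) : List Bool :=
  (List.range L).map fun k : ℕ => decide (t + k ∈ A)

section Translations

variable {G : Type*} [AddCommGroup G] {N T L : ℕ}

/-- The connection schedule that translates by `g t` in timeslot `t`, where the nodes are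
identified with an abelian group by `e`. -/
def translationSched (hT : 0 < T) (e : G ≃ Fin N) {g : ℤ → G} (hg : Function.Periodic g T) :
    ConnSched N T where
  Tpos := hT
  perm t := e.symm.trans ((Equiv.addRight (g t)).trans e)
  periodic t := by rw [hg t]

lemma foldl_slotSteps (hT : 0 < T) (e : G ≃ Fin N) {g : ℤ → G} (hg : Function.Periodic g T)
    (A : Finset ℤ) (x : G) (t : ℤ) (n : ℕ) :
    (slotSteps A t n).foldl (ORNPath.stepFn (translationSched hT e hg)) (e x, t) =
      (e (x + ∑ u ∈ A ∩ Ico t (t + n), g u), t + n) := by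
  induction n with
  | zero => simp [slotSteps]
  | succ n ih =>
    have sum_succ : ∑ u ∈ A ∩ Ico t (t + (n + 1 : ℕ)), g u =
        ∑ u ∈ A ∩ Ico t (t + n), g u + if t + n ∈ A then g (t + n) else 0 := by
      have hIco : Ico t (t + (n + 1 : ℕ)) = insert (t + n) (Ico t (t + n)) := by
        ext u
        simp only [mem_Ico, mem_insert]
        omega
      rw [hIco]
      split_ifs with hA
      · rw [inter_insert_of_mem hA, sum_insert (by simp), add_comm]
      · rw [inter_insert_of_notMem hA, add_zero]
    rw [slotSteps] at ih ⊢
    rw [List.range_succ, List.map_append, List.foldl_append, ih, sum_succ]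
    by_cases hA : t + n ∈ A <;> simp [ORNPath.stepFn, translationSched, hA, add_assoc]

/-- A `T`-periodic choice, for each start time `t` and each displacement `x`, of timeslots among
the next `L` whose translations add up to `x`. -/
structure SlotSystem (g : ℤ → G) (T L : ℕ) where
  slots : ℤ → G → Finset ℤ
  slots_subset : ∀ t x, slots t x ⊆ Ico t (t + L)
  sum_eq : ∀ t x, ∑ u ∈ slots t x, g u = x
  mem_periodic : ∀ (t : ℤ) (x : G) (u : ℤ), u + T ∈ slots (t + T) x ↔ u ∈ slots t x

namespace SlotSystem

variable {g : ℤ → G} (Y : SlotSystem g T L) (hT : 0 < T) (e : G ≃ Fin N)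
  (hg : Function.Periodic g T)

/-- The path system on a schedule of translations that travels from `a` to `b` in the timeslots
chosen for the displacement between them. -/
def pathSystem : PathSystem (translationSched hT e hg) L where
  steps a b t := slotSteps (Y.slots t (e.symm b - e.symm a)) t L
  dest_eq a b t := by
    have h := foldl_slotSteps hT e hg (Y.slots t (e.symm b - e.symm a)) (e.symm a) t L
    rw [inter_eq_left.2 (Y.slots_subset t _), Y.sum_eq] at h
    simpa [ORNPath.dest] using h
  steps_periodic a b t := by
    simp only [slotSteps, add_right_comm t (T : ℤ), Y.mem_periodic]

variable {hT e hg}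

lemma usesEdge_path {a b : Fin N} {t : ℤ} {v : Fin N} {τ : ℤ}
    (h : ((Y.pathSystem hT e hg).path a b t).usesEdge (translationSched hT e hg) (v, τ)) :
    τ ∈ Y.slots t (e.symm b - e.symm a) ∧
      e.symm a + ∑ u ∈ Y.slots t (e.symm b - e.symm a) ∩ Ico t τ, g u = e.symm v := by
  obtain ⟨k, hk, hvertex⟩ := (usesEdge_iff _).1 h
  obtain ⟨hkL, hk⟩ := List.getElem?_eq_some_iff.1 hk
  simp only [PathSystem.path, pathSystem, slotSteps, List.length_map, List.length_range,
    List.getElem_map, List.getElem_range, decide_eq_true_eq] at hkL hk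
  have hfold := foldl_slotSteps hT e hg (Y.slots t (e.symm b - e.symm a)) (e.symm a) t k
  simp only [ORNPath.vertexAt, PathSystem.path, pathSystem, slotSteps, ← List.map_take,
    List.take_range, min_eq_left hkL.le] at hvertex
  rw [slotSteps, e.apply_symm_apply, hvertex, Prod.mk.injEq] at hfold
  obtain ⟨rfl, rfl⟩ := hfold
  exact ⟨hk, (e.symm_apply_apply _).symm⟩

/-- For a given displacement, the edge `(v, τ)` determines where a path through it started. -/
lemma load_pathSystem_le [Fintype G] (v : Fin N) (τ : ℤ) :
    (Y.pathSystem hT e hg).load (v, τ) ≤ ∑' t, (#{x | τ ∈ Y.slots t x} : ℝ≥0∞) := by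
  classical
  refine ENNReal.tsum_le_tsum fun t => ?_
  simp only [← Nat.cast_sum, Nat.cast_le, card_filter, ← Fintype.sum_prod_type']
  simp only [← card_filter]
  refine card_le_card_of_injOn (fun ab => e.symm ab.2 - e.symm ab.1)
    (fun ab hab => mem_filter.2 ⟨mem_univ _, (Y.usesEdge_path (mem_filter.1 hab).2).1⟩) ?_
  rintro ⟨a, b⟩ hab ⟨a', b'⟩ hab' hdisp
  have horigin := (Y.usesEdge_path (mem_filter.1 hab).2).2
  have horigin' := (Y.usesEdge_path (mem_filter.1 hab').2).2
  simp only at hdisp horigin horigin'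
  rw [hdisp, ← horigin', add_left_inj, e.symm.apply_eq_iff_eq] at horigin
  subst horigin
  simpa using hdisp

end SlotSystem

end Translations

/-! ### Schedules of scaled directions -/

/-- A choice, for each vector, of coefficients that express it through the family `v`, commuting
with scaling by units. -/
structure HomogeneousCoeffs (K : Type*) {V ι : Type*} [Field K] [AddCommGroup V] [Module K V]
    [Fintype ι] (v : ι → V) where
  coeff : V → ι → K
  coeff_smul : ∀ (s : Kˣ) (c : V), coeff (s • c) = s • coeff c
  sum_smul : ∀ c, ∑ i, coeff c i • v i = c

namespace HomogeneousCoeffs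

variable {K V ι : Type*} [Field K] [AddCommGroup V] [Module K V] [Fintype ι]
  {v : ι → V} (φ : HomogeneousCoeffs K v)

lemma coeff_units_smul_apply (s : Kˣ) (c : V) (i : ι) :
    φ.coeff (s • c) i = s * φ.coeff c i := by
  rw [φ.coeff_smul, Pi.smul_apply, Units.smul_def, smul_eq_mul]

variable [Fintype V] [DecidableEq K]

/-- The number of nonzero coefficients, over all vectors. -/
noncomputable def totalWeight : ℕ := ∑ c, #{i | φ.coeff c i ≠ 0}

lemma totalWeight_eq_sum : φ.totalWeight = ∑ i, #{c | φ.coeff c i ≠ 0} := by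
  simp only [totalWeight, card_filter]
  exact sum_comm

lemma card_units_mul_card_coeff_eq [Fintype Kˣ] (i : ι) (s : Kˣ) :
    Fintype.card Kˣ * #{c | φ.coeff c i = s} = #{c | φ.coeff c i ≠ 0} := by
  rw [← card_univ, ← card_product]
  refine card_nbij (fun uc => uc.1 • uc.2) ?_ ?_ ?_
  · rintro ⟨u, c⟩ h
    have hc : φ.coeff c i = s := by simpa using h
    simp [coeff_units_smul_apply, hc]
  · rintro ⟨u, c⟩ h ⟨u', c'⟩ h' heq
    have hc : φ.coeff c i = s := by simpa using h
    have hc' : φ.coeff c' i = s := by simpa using h'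
    simp only at heq
    obtain rfl : u = u' := by
      have hcoeff := congrArg (φ.coeff · i) heq
      simpa only [coeff_units_smul_apply, hc, hc', mul_left_inj' s.ne_zero, Units.val_inj]
        using hcoeff
    rw [smul_left_cancel u heq]
  · intro c hc
    have hci : φ.coeff c i ≠ 0 := by simpa using hc
    set u := Units.mk0 (φ.coeff c i) hci * s⁻¹ with hu
    refine ⟨(u, u⁻¹ • c), ?_, smul_inv_smul u c⟩
    have hcoeff : φ.coeff (u⁻¹ • c) i = s := by
      simp [coeff_units_smul_apply, hu, hci]
    simpa using hcoeff

end HomogeneousCoeffs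

section PhaseSchedule

variable (K : Type*) [Field K] [Fintype K] [DecidableEq K]

/-- The timeslots are grouped into phases of `card Kˣ` consecutive slots, one slot for each unit
of `K`. -/
noncomputable def slotEquiv : ℤ ≃ ℤ × Kˣ :=
  (Int.divModEquiv (Fintype.card Kˣ)).trans
    ((Equiv.refl ℤ).prodCongr (Fintype.equivFin Kˣ).symm)

lemma slotEquiv_fst (u : ℤ) : (slotEquiv K u).1 = u / Fintype.card Kˣ := rfl

lemma slotEquiv_symm_add (j k : ℤ) (s : Kˣ) :
    (slotEquiv K).symm (j + k, s) = (slotEquiv K).symm (j, s) + Fintype.card Kˣ * k := by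
  simp only [slotEquiv, Equiv.symm_trans_apply, Equiv.prodCongr_symm, Equiv.prodCongr_apply,
    Prod.map_apply, Int.divModEquiv_symm_apply, Equiv.refl_symm, Equiv.refl_apply]
  ring

lemma slotEquiv_add_mul (u k : ℤ) :
    slotEquiv K (u + Fintype.card Kˣ * k) = ((slotEquiv K u).1 + k, (slotEquiv K u).2) := by
  rw [← Equiv.eq_symm_apply, slotEquiv_symm_add, Prod.mk.eta, Equiv.symm_apply_apply]

lemma slotEquiv_symm_mem_Ico (t : ℤ) {i Q : ℕ} (hi : i < Q) (s : Kˣ) :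
    (slotEquiv K).symm ((slotEquiv K t).1 + 1 + i, s) ∈
      Ico t (t + ((Q + 1) * Fintype.card Kˣ : ℕ)) := by
  set n := Fintype.card Kˣ
  set u := (slotEquiv K).symm ((slotEquiv K t).1 + 1 + i, s) with hu
  have hn : (0 : ℤ) < n := by exact_mod_cast Fintype.card_pos
  have hphase : u / n = t / n + 1 + i := by
    rw [← slotEquiv_fst, hu, Equiv.apply_symm_apply, slotEquiv_fst]
  have hi₀ : 0 ≤ (i : ℤ) * n := by positivity
  have hiQ : ((i : ℤ) + 1) * n ≤ Q * n := by gcongr; exact_mod_cast hi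
  have hu₁ := Int.ediv_mul_le u hn.ne'
  have hu₂ := Int.lt_ediv_add_one_mul_self u hn
  have ht₁ := Int.ediv_mul_le t hn.ne'
  have ht₂ := Int.lt_ediv_add_one_mul_self t hn
  rw [hphase] at hu₁ hu₂
  rw [mem_Ico]
  push_cast
  constructor <;> linarith

variable {K} {V : Type*} [AddCommGroup V] [Module K V] {Q : ℕ}

/-- The translation `s • (M ^ j) w` performed in the slot of phase `j` that belongs to `s`. -/
noncomputable def phaseTranslation (M : V ≃ₗ[K] V) (w : V) (u : ℤ) : V :=
  (slotEquiv K u).2 • (M ^ (slotEquiv K u).1) w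

lemma periodic_phaseTranslation (M : V ≃ₗ[K] V) (w : V) :
    Function.Periodic (phaseTranslation M w) (Fintype.card Kˣ * orderOf M : ℕ) := by
  intro u
  have hM : M ^ (orderOf M : ℤ) = 1 := by rw [zpow_natCast, pow_orderOf_eq_one]
  rw [phaseTranslation, Nat.cast_mul, slotEquiv_add_mul, zpow_add, hM, mul_one,
    phaseTranslation]

/-- The timeslots in the `Q` phases from `j` on that realise the coefficients `f`: in phase
`j + i` the slot of the unit `f i`, if `f i ≠ 0`. -/
noncomputable def windowSlots (j : ℤ) (f : Fin Q → K) : Finset ℤ :=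
  ({p : Fin Q × Kˣ | f p.1 = p.2} : Finset _).image fun p => (slotEquiv K).symm (j + p.1, p.2)

lemma mem_windowSlots {j : ℤ} {f : Fin Q → K} {u : ℤ} :
    u ∈ windowSlots j f ↔
      ∃ i : Fin Q, (slotEquiv K u).1 = j + i ∧ f i = (slotEquiv K u).2 := by
  simp only [windowSlots, mem_image, mem_filter, mem_univ, true_and, Prod.exists,
    Equiv.symm_apply_eq]
  constructor
  · rintro ⟨i, s, hs, hu⟩
    exact ⟨i, by rw [← hu], by rw [hs, ← hu]⟩
  · rintro ⟨i, hi, hs⟩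
    exact ⟨i, _, hs, by rw [← hi]⟩

lemma add_mul_mem_windowSlots {j k : ℤ} {f : Fin Q → K} {u : ℤ} :
    u + Fintype.card Kˣ * k ∈ windowSlots (j + k) f ↔ u ∈ windowSlots j f := by
  simp only [mem_windowSlots, slotEquiv_add_mul, add_right_comm j k, add_left_inj]

lemma windowSlots_subset (t : ℤ) (f : Fin Q → K) :
    windowSlots ((slotEquiv K t).1 + 1) f ⊆
      Ico t (t + ((Q + 1) * Fintype.card Kˣ : ℕ)) := by
  intro u hu
  obtain ⟨i, hi, -⟩ := mem_windowSlots.1 hu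
  have := slotEquiv_symm_mem_Ico K t i.isLt (slotEquiv K u).2
  rwa [← hi, Prod.mk.eta, Equiv.symm_apply_apply] at this

lemma sum_ite_eq_units_smul (a : K) (y : V) :
    ∑ s : Kˣ, (if a = s then s • y else 0) = a • y := by
  rcases eq_or_ne a 0 with rfl | ha
  · simp [eq_comm (a := (0 : K))]
  · rw [Fintype.sum_eq_single (Units.mk0 a ha) fun s hs =>
      if_neg fun h => hs (Units.ext h.symm)]
    simp [Units.smul_def]

lemma sum_windowSlots (M : V ≃ₗ[K] V) (w : V) (j : ℤ) (f : Fin Q → K) :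
    ∑ u ∈ windowSlots j f, phaseTranslation M w u =
      (M ^ j) (∑ i, f i • (M ^ (i : ℕ)) w) := by
  have hinj : Function.Injective fun p : Fin Q × Kˣ => (slotEquiv K).symm (j + p.1, p.2) := by
    rintro ⟨i, s⟩ ⟨i', s'⟩ h
    simpa [Fin.ext_iff] using h
  rw [windowSlots, sum_image hinj.injOn, sum_filter, Fintype.sum_prod_type, map_sum]
  refine sum_congr rfl fun i _ => ?_
  simp only [phaseTranslation, Equiv.apply_symm_apply]
  rw [sum_ite_eq_units_smul, map_smul, zpow_add, zpow_natCast, LinearEquiv.mul_apply]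

section PhaseSlots

variable {M : V ≃ₗ[K] V} {w : V} (φ : HomogeneousCoeffs K fun i : Fin Q => (M ^ (i : ℕ)) w)

/-- The slots of a displacement `x` are found in the phases following the start time, the first of
which is `j`, by expanding `(M ^ j)⁻¹ x` in the directions `(M ^ i) w`. -/
noncomputable def phaseSlots :
    SlotSystem (phaseTranslation M w) (Fintype.card Kˣ * orderOf M)
      ((Q + 1) * Fintype.card Kˣ) where
  slots t x := windowSlots ((slotEquiv K t).1 + 1)
    (φ.coeff ((M ^ ((slotEquiv K t).1 + 1))⁻¹ x))
  slots_subset t x := windowSlots_subset t _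
  sum_eq t x := by
    rw [sum_windowSlots, φ.sum_smul, ← LinearEquiv.mul_apply, mul_inv_cancel]
    rfl
  mem_periodic t x u := by
    have hM : M ^ (orderOf M : ℤ) = 1 := by rw [zpow_natCast, pow_orderOf_eq_one]
    simp only [Nat.cast_mul, slotEquiv_add_mul, add_right_comm _ (orderOf M : ℤ)]
    rw [zpow_add _ _ (orderOf M : ℤ), hM, mul_one, add_mul_mem_windowSlots]

lemma card_phaseSlots_le [Fintype V] (τ t : ℤ) :
    #{x | τ ∈ (phaseSlots φ).slots t x} ≤
      ∑ i : Fin Q, if (slotEquiv K t).1 = (slotEquiv K τ).1 - 1 - i then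
        #{c | φ.coeff c i = (slotEquiv K τ).2} else 0 := by
  classical
  rw [← sum_filter]
  refine le_trans ?_ card_biUnion_le
  refine card_le_card_of_injOn (fun x => (M ^ ((slotEquiv K t).1 + 1))⁻¹ x) (fun x hx => ?_)
    (LinearEquiv.injective _).injOn
  obtain ⟨i, hi, hcoeff⟩ := mem_windowSlots.1 (mem_filter.1 hx).2
  simp only [mem_coe, mem_biUnion, mem_filter, mem_univ, true_and]
  exact ⟨i, by rw [hi]; ring, hcoeff⟩

lemma tsum_ite_phase_eq (j : ℤ) (x : ℝ≥0∞) :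
    ∑' t, (if (slotEquiv K t).1 = j then x else 0) = Fintype.card Kˣ * x := by
  rw [(slotEquiv K).tsum_eq fun p => if p.1 = j then x else 0, ENNReal.tsum_prod',
    ENNReal.tsum_comm]
  simp

lemma tsum_card_phaseSlots_le [Fintype V] (τ : ℤ) :
    ∑' t, (#{x | τ ∈ (phaseSlots φ).slots t x} : ℝ≥0∞) ≤ φ.totalWeight := by
  calc ∑' t, (#{x | τ ∈ (phaseSlots φ).slots t x} : ℝ≥0∞)
      ≤ ∑' t, ∑ i : Fin Q, (if (slotEquiv K t).1 = (slotEquiv K τ).1 - 1 - i then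
          (#{c | φ.coeff c i = (slotEquiv K τ).2} : ℝ≥0∞) else 0) := by
        gcongr with t
        exact_mod_cast card_phaseSlots_le φ τ t
    _ = ∑ i, (Fintype.card Kˣ * #{c | φ.coeff c i = (slotEquiv K τ).2} : ℝ≥0∞) := by
        rw [Summable.tsum_finsetSum fun _ _ => ENNReal.summable]
        simp only [tsum_ite_phase_eq]
    _ = φ.totalWeight := by
        rw [φ.totalWeight_eq_sum]
        exact_mod_cast sum_congr rfl fun i _ =>
          φ.card_units_mul_card_coeff_eq i (slotEquiv K τ).2

end PhaseSlots

end PhaseSchedule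

/-- Some design on `N` nodes guarantees throughput `r` with maximum latency at most `L`. -/
def HasDesign (N : ℕ) (r : ℝ) (L : ℕ) : Prop :=
  ∃ (T : ℕ) (R : ORNDesign N T), GuaranteesThroughput R r ∧ MaxLatencyLE R L

theorem HomogeneousCoeffs.hasDesign {K V : Type*} [Field K] [Fintype K]
    [DecidableEq K] [AddCommGroup V] [Module K V] [Fintype V] {M : V ≃ₗ[K] V} {w : V} {Q : ℕ}
    (φ : HomogeneousCoeffs K fun i : Fin Q => (M ^ (i : ℕ)) w) {r : ℝ}
    (hr : 2 * r * φ.totalWeight ≤ Fintype.card V) :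
    HasDesign (Fintype.card V) r (2 * ((Q + 1) * Fintype.card Kˣ)) := by
  have : Finite (V ≃ₗ[K] V) := DFunLike.finite _
  have hT : 0 < Fintype.card Kˣ * orderOf M := Nat.mul_pos Fintype.card_pos (orderOf_pos M)
  set X := (phaseSlots φ).pathSystem hT (Fintype.equivFin V) (periodic_phaseTranslation M w)
  refine ⟨_, X.twoStageDesign, X.guaranteesThroughput_twoStageDesign fun e => ?_,
    X.maxLatencyLE_twoStageDesign⟩
  calc 2 * ENNReal.ofReal r * X.load e ≤ 2 * ENNReal.ofReal r * φ.totalWeight := by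
        gcongr
        exact ((phaseSlots φ).load_pathSystem_le e.1 e.2).trans (tsum_card_phaseSlots_le φ e.2)
    _ = ENNReal.ofReal (2 * r * φ.totalWeight) := by
        rw [ENNReal.ofReal_mul' (Nat.cast_nonneg _), ENNReal.ofReal_mul zero_le_two,
          ENNReal.ofReal_ofNat, ENNReal.ofReal_natCast]
    _ ≤ Fintype.card V := by
        rw [← ENNReal.ofReal_natCast (Fintype.card V)]
        exact ENNReal.ofReal_le_ofReal hr

/-! ### Sparse decompositions -/

section SparseDecompositions

variable {K V ι : Type*} [Field K] [AddCommGroup V] [Module K V]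

lemma exists_linear_coeffs [Fintype ι] (v : ι → V) (A : Finset ι) :
    ∃ ψ : V →ₗ[K] ι → K, (∀ c, ∀ i ∉ A, ψ c i = 0) ∧
      ∀ c ∈ Submodule.span K (v '' A), ∑ i, ψ c i • v i = c := by
  classical
  let restrict : (ι → K) →ₗ[K] ι → K := .pi fun i => if i ∈ A then .proj i else 0
  let F : (ι → K) →ₗ[K] V := Fintype.linearCombination K v ∘ₗ restrict
  have span_le_range : Submodule.span K (v '' A) ≤ LinearMap.range F := by
    rw [Submodule.span_le]
    rintro _ ⟨i, hi, rfl⟩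
    refine ⟨Pi.single i 1, ?_⟩
    simp only [F, LinearMap.comp_apply, Fintype.linearCombination_apply]
    rw [Fintype.sum_eq_single i]
    · simp [restrict, mem_coe.1 hi]
    · intro i' hi'
      by_cases hA : i' ∈ A <;> simp [restrict, hA, hi']
  obtain ⟨g, hg⟩ := F.rangeRestrict.exists_rightInverse_of_surjective F.range_rangeRestrict
  obtain ⟨g', hg'⟩ := g.exists_extend
  refine ⟨restrict ∘ₗ g', fun c i hi => by simp [restrict, hi], fun c hc => ?_⟩
  have hFg : F.rangeRestrict (g ⟨c, span_le_range hc⟩) = ⟨c, span_le_range hc⟩ :=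
    LinearMap.congr_fun hg _
  rw [← hg'] at hFg
  exact congrArg Subtype.val hFg

/-- The support of `c` is chosen as a function of the line through `c`, which makes the
coefficients homogeneous. -/
lemma exists_homogeneousCoeffs [Fintype ι] [DecidableEq K] {v : ι → V}
    (hv : Submodule.span K (Set.range v) = ⊤) :
    ∃ φ : HomogeneousCoeffs K v, ∀ (c : V) (A : Finset ι), c ∈ Submodule.span K (v '' A) →
      #{i | φ.coeff c i ≠ 0} ≤ #A := by
  let supports (c : V) : Set (Finset ι) := {A | c ∈ Submodule.span K (v '' A)}
  have supports_nonempty (c : V) : (supports c).Nonempty := ⟨univ, by simp [supports, hv]⟩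
  have supports_smul (s : Kˣ) (c : V) : supports (s • c) = supports c := by
    ext A
    exact Submodule.smul_mem_iff' (Submodule.span K (v '' A)) s
  have exists_min (𝒜 : Set (Finset ι)) : 𝒜.Nonempty → ∃ A ∈ 𝒜, ∀ B ∈ 𝒜, #A ≤ #B :=
    Set.exists_min_image 𝒜 card 𝒜.toFinite
  choose! smallest smallest_mem smallest_le using exists_min
  choose ψ ψ_support ψ_sum using exists_linear_coeffs (K := K) v
  refine ⟨⟨fun c => ψ (smallest (supports c)) c, fun s c => ?_, fun c => ?_⟩, fun c A hA => ?_⟩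
  · rw [supports_smul, Units.smul_def, Units.smul_def, map_smul]
  · exact ψ_sum _ c (smallest_mem _ (supports_nonempty c))
  · refine le_trans (card_le_card fun i hi => ?_) (smallest_le _ (supports_nonempty c) A hA)
    by_contra hi'
    exact (mem_filter.1 hi).2 (ψ_support _ c i hi')

/-- Any `finrank K V` or fewer of the vectors `v i` are linearly independent. -/
def InGeneralPosition (K : Type*) {V ι : Type*} [Field K] [AddCommGroup V] [Module K V]
    (v : ι → V) : Prop :=
  ∀ A : Finset ι, #A ≤ finrank K V → LinearIndepOn K v A

namespace InGeneralPosition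

variable {v : ι → V}

lemma finrank_span (hv : InGeneralPosition K v) {A : Finset ι} (hA : #A ≤ finrank K V) :
    finrank K (Submodule.span K (v '' A)) = #A := by
  have h := finrank_span_eq_card (hv A hA).linearIndependent
  rw [Set.range_comp', Subtype.range_coe_subtype] at h
  simpa using h

lemma span_eq_top [FiniteDimensional K V] (hv : InGeneralPosition K v) {A : Finset ι}
    (hA : #A = finrank K V) : Submodule.span K (v '' A) = ⊤ :=
  Submodule.eq_top_of_finrank_eq ((hv.finrank_span hA.le).trans hA)

lemma span_range_eq_top [Fintype ι] [FiniteDimensional K V] (hv : InGeneralPosition K v)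
    (hcard : finrank K V ≤ Fintype.card ι) : Submodule.span K (Set.range v) = ⊤ := by
  obtain ⟨A, -, hA⟩ := exists_subset_card_eq (hcard.trans_eq card_univ.symm)
  exact top_unique ((hv.span_eq_top hA).ge.trans
    (Submodule.span_mono (Set.image_subset_range v A)))

lemma eq_of_span_eq (hv : InGeneralPosition K v) {A B : Finset ι} (hA : #A < finrank K V)
    (hcard : #A = #B)
    (hspan : Submodule.span K (v '' A) = Submodule.span K (v '' B)) : A = B := by
  classical
  refine (eq_of_subset_of_card_le (fun i hiB => ?_) hcard.le).symm
  by_contra hiA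
  have hinsert := hv (insert i A) (by rwa [card_insert_of_notMem hiA])
  rw [coe_insert] at hinsert
  refine hinsert.notMem_span_of_insert (mod_cast hiA) ?_
  rw [hspan]
  exact Submodule.subset_span ⟨i, hiB, rfl⟩

end InGeneralPosition

end SparseDecompositions

/-! ### Unions of hyperplanes -/

section Hyperplanes

lemma sum_card_eq_sum_card_filter_mem {α κ : Type*} [DecidableEq α] {s : Finset κ}
    {f : κ → Finset α} {U : Finset α} (hU : ∀ k ∈ s, f k ⊆ U) :
    ∑ k ∈ s, #(f k) = ∑ x ∈ U, #{k ∈ s | x ∈ f k} := by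
  refine Eq.trans (sum_congr rfl fun k hk => ?_)
    (sum_card_bipartiteAbove_eq_sum_card_bipartiteBelow (t := U) fun k x => x ∈ f k)
  rw [bipartiteAbove, filter_mem_eq_inter, inter_eq_right.2 (hU k hk)]

lemma sq_sum_card_le {α κ : Type*} [DecidableEq α] (s : Finset κ) (f : κ → Finset α) :
    (∑ k ∈ s, #(f k)) ^ 2 ≤ #(s.biUnion f) * ∑ k ∈ s, ∑ l ∈ s, #(f k ∩ f l) := by
  set U := s.biUnion f
  have subset {k : κ} (hk : k ∈ s) : f k ⊆ U := subset_biUnion_of_mem f hk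
  have sum_sq : ∑ k ∈ s, ∑ l ∈ s, #(f k ∩ f l) = ∑ x ∈ U, #{k ∈ s | x ∈ f k} ^ 2 := by
    rw [← sum_product', sum_card_eq_sum_card_filter_mem (U := U) fun p hp =>
      inter_subset_left.trans (subset (mem_product.1 hp).1)]
    simp only [mem_inter, sq, ← card_product, ← filter_product]
  rw [sum_card_eq_sum_card_filter_mem fun k => subset, sum_sq]
  exact sq_sum_le_card_mul_sum_sq

variable {K V : Type*} [Field K] [AddCommGroup V] [Module K V]

lemma finrank_inf_add_two_le [FiniteDimensional K V] {W W' : Submodule K V}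
    (hW : finrank K W + 1 = finrank K V) (hW' : finrank K W' + 1 = finrank K V) (hne : W ≠ W') :
    finrank K (W ⊓ W' : Submodule K V) + 2 ≤ finrank K V := by
  have hlt : W ⊓ W' < W := inf_le_left.lt_of_ne fun h =>
    hne (Submodule.eq_of_le_of_finrank_eq (inf_eq_left.1 h) (by omega))
  have := Submodule.finrank_lt_finrank_of_lt hlt
  omega

variable [Fintype K] [Fintype V]

open Classical in
lemma card_submodule (W : Submodule K V) :
    #{c | c ∈ W} = Fintype.card K ^ finrank K W := by
  rw [← Fintype.card_subtype]
  exact card_eq_pow_finrank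

open Classical in
lemma card_mul_card_hyperplane {W : Submodule K V} (hW : finrank K W + 1 = finrank K V) :
    Fintype.card K * #{c | c ∈ W} = Fintype.card V := by
  rw [card_submodule, ← pow_succ', hW, ← card_eq_pow_finrank]

variable {ℋ : Finset (Submodule K V)}

open Classical in
/-- Distinct hyperplanes meet in codimension two. -/
lemma sq_card_mul_sum_card_inf_le (hℋ : ∀ W ∈ ℋ, finrank K W + 1 = finrank K V) :
    Fintype.card K ^ 2 * ∑ W ∈ ℋ, ∑ W' ∈ ℋ, #{c | c ∈ W ⊓ W'} ≤
      #ℋ * Fintype.card V * (Fintype.card K + #ℋ) := by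
  set q := Fintype.card K
  set n := Fintype.card V
  have card_inter {W W' : Submodule K V} (hW : W ∈ ℋ) (hW' : W' ∈ ℋ) :
      q ^ 2 * #{c | c ∈ W ⊓ W'} ≤ n + if W = W' then q * n else 0 := by
    split_ifs with h
    · rw [← h, inf_idem, sq, mul_assoc, card_mul_card_hyperplane (hℋ W hW)]
      exact Nat.le_add_left _ _
    · rw [card_submodule, ← pow_add, add_zero]
      refine (Nat.pow_le_pow_right Fintype.card_pos ?_).trans_eq card_eq_pow_finrank.symm
      linarith [finrank_inf_add_two_le (hℋ W hW) (hℋ W' hW') h]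
  calc q ^ 2 * ∑ W ∈ ℋ, ∑ W' ∈ ℋ, #{c | c ∈ W ⊓ W'}
      ≤ ∑ W ∈ ℋ, ∑ W' ∈ ℋ, (n + if W = W' then q * n else 0) := by
        simp only [mul_sum]
        exact sum_le_sum fun W hW => sum_le_sum fun W' hW' => card_inter hW hW'
    _ = ∑ _W ∈ ℋ, (#ℋ * n + q * n) := by
        refine sum_congr rfl fun W hW => ?_
        rw [sum_add_distrib, sum_const, smul_eq_mul, sum_ite_eq, if_pos hW]
    _ = #ℋ * n * (q + #ℋ) := by
        rw [sum_const, smul_eq_mul]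
        ring

open Classical in
lemma card_mul_card_le_card_biUnion_mul (hℋ : ∀ W ∈ ℋ, finrank K W + 1 = finrank K V) :
    #ℋ * Fintype.card V ≤
      #(ℋ.biUnion fun W => {c | c ∈ W}) * (Fintype.card K + #ℋ) := by
  set q := Fintype.card K
  set n := Fintype.card V
  set points : Submodule K V → Finset V := fun W => {c | c ∈ W}
  have points_inter (W W' : Submodule K V) : points W ∩ points W' = points (W ⊓ W') := by
    ext c
    simp [points]
  have sum_points : q * ∑ W ∈ ℋ, #(points W) = #ℋ * n := by
    rw [mul_sum, sum_congr rfl fun W hW => card_mul_card_hyperplane (hℋ W hW), sum_const,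
      smul_eq_mul]
  rcases ℋ.eq_empty_or_nonempty with rfl | hne
  · simp
  refine Nat.le_of_mul_le_mul_left ?_
    (Nat.mul_pos hne.card_pos (Fintype.card_pos : 0 < Fintype.card V))
  calc #ℋ * n * (#ℋ * n) = q ^ 2 * (∑ W ∈ ℋ, #(points W)) ^ 2 := by
        rw [← mul_pow, sum_points, sq]
    _ ≤ q ^ 2 * (#(ℋ.biUnion points) * ∑ W ∈ ℋ, ∑ W' ∈ ℋ, #(points W ∩ points W')) := by
        gcongr
        exact sq_sum_card_le ℋ points
    _ = #(ℋ.biUnion points) *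
          (q ^ 2 * ∑ W ∈ ℋ, ∑ W' ∈ ℋ, #(points W ∩ points W')) := by ring
    _ ≤ #(ℋ.biUnion points) * (#ℋ * n * (q + #ℋ)) := by
        simp only [points_inter]
        exact Nat.mul_le_mul_left _ (sq_card_mul_sum_card_inf_le hℋ)
    _ = #ℋ * n * (#(ℋ.biUnion points) * (q + #ℋ)) := by ring

end Hyperplanes

section TotalWeight

variable {K V ι : Type*} [Field K] [AddCommGroup V] [Module K V] [Fintype V] [Fintype ι]
  {v : ι → V}

lemma InGeneralPosition.exists_totalWeight_le [DecidableEq K] (hv : InGeneralPosition K v)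
    (hcard : finrank K V ≤ Fintype.card ι) :
    ∃ φ : HomogeneousCoeffs K v, φ.totalWeight ≤ finrank K V * Fintype.card V := by
  obtain ⟨φ, hφ⟩ := exists_homogeneousCoeffs (hv.span_range_eq_top hcard)
  obtain ⟨A, -, hA⟩ := exists_subset_card_eq (hcard.trans_eq card_univ.symm)
  refine ⟨φ, ?_⟩
  calc φ.totalWeight ≤ ∑ _c : V, #A :=
        sum_le_sum fun c _ => hφ c A (by simp [hv.span_eq_top hA])
    _ = finrank K V * Fintype.card V := by rw [sum_const, card_univ, smul_eq_mul, hA, mul_comm]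

open Classical in
lemma InGeneralPosition.choose_mul_card_le [Fintype K] (hv : InGeneralPosition K v) {h : ℕ}
    (hh : finrank K V = h + 1) :
    (Fintype.card ι).choose h * Fintype.card V ≤
      #{c | ∃ A : Finset ι, #A = h ∧ c ∈ Submodule.span K (v '' A)} *
        (Fintype.card K + (Fintype.card ι).choose h) := by
  let ℋ : Finset (Submodule K V) :=
    (powersetCard h univ).image fun A : Finset ι => Submodule.span K (v '' A)
  have card_hyperplanes : #ℋ = (Fintype.card ι).choose h := by
    rw [card_image_of_injOn, card_powersetCard, card_univ]
    intro A hA B hB hAB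
    have hA := (mem_powersetCard.1 hA).2
    have hB := (mem_powersetCard.1 hB).2
    exact hv.eq_of_span_eq (by omega) (by omega) hAB
  have finrank_hyperplane : ∀ W ∈ ℋ, finrank K W + 1 = finrank K V := by
    intro W hW
    obtain ⟨A, hA, rfl⟩ := mem_image.1 hW
    have hA := (mem_powersetCard.1 hA).2
    rw [hv.finrank_span (by omega), hA, hh]
  rw [← card_hyperplanes]
  refine (card_mul_card_le_card_biUnion_mul finrank_hyperplane).trans
    (Nat.mul_le_mul_right _ (card_le_card fun c hc => ?_))
  obtain ⟨W, hW, hcW⟩ := mem_biUnion.1 hc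
  obtain ⟨A, hA, rfl⟩ := mem_image.1 hW
  simp only [mem_filter, mem_univ, true_and] at hcW ⊢
  exact ⟨A, (mem_powersetCard.1 hA).2, hcW⟩

/-- A vector in the span of only `h` of the `v i` saves a coefficient. -/
lemma InGeneralPosition.exists_totalWeight_mul_add_le [Fintype K] [DecidableEq K]
    (hv : InGeneralPosition K v) {h : ℕ} (hh : finrank K V = h + 1)
    (hcard : h + 1 ≤ Fintype.card ι) :
    ∃ φ : HomogeneousCoeffs K v,
      φ.totalWeight * (Fintype.card K + (Fintype.card ι).choose h) +
          (Fintype.card ι).choose h * Fintype.card V ≤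
        (h + 1) * Fintype.card V * (Fintype.card K + (Fintype.card ι).choose h) := by
  classical
  obtain ⟨φ, hφ⟩ := exists_homogeneousCoeffs (hv.span_range_eq_top (hh.trans_le hcard))
  obtain ⟨A₀, -, hA₀⟩ := exists_subset_card_eq (hcard.trans_eq card_univ.symm)
  set sparse : Finset V := {c | ∃ A : Finset ι, #A = h ∧ c ∈ Submodule.span K (v '' A)}
  have weight_le (c : V) : #{i | φ.coeff c i ≠ 0} + (if c ∈ sparse then 1 else 0) ≤ h + 1 := by
    split_ifs with hc
    · obtain ⟨A, hA, hcA⟩ := (mem_filter.1 hc).2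
      exact Nat.succ_le_succ (hA ▸ hφ c A hcA)
    · exact hA₀ ▸ hφ c A₀ (by simp [hv.span_eq_top (hA₀.trans hh.symm)])
  have totalWeight_add_le : φ.totalWeight + #sparse ≤ (h + 1) * Fintype.card V := by
    calc φ.totalWeight + #sparse
        = ∑ c, (#{i | φ.coeff c i ≠ 0} + if c ∈ sparse then 1 else 0) := by
          rw [sum_add_distrib, sum_boole, filter_univ_mem, Nat.cast_id]
          rfl
      _ ≤ ∑ _c : V, (h + 1) := sum_le_sum fun c _ => weight_le c
      _ = (h + 1) * Fintype.card V := by rw [sum_const, card_univ, smul_eq_mul, mul_comm]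
  refine ⟨φ, ?_⟩
  set B := (Fintype.card ι).choose h
  calc φ.totalWeight * (Fintype.card K + B) + B * Fintype.card V
      ≤ φ.totalWeight * (Fintype.card K + B) + #sparse * (Fintype.card K + B) :=
        Nat.add_le_add_left (hv.choose_mul_card_le hh) _
    _ = (φ.totalWeight + #sparse) * (Fintype.card K + B) := by ring
    _ ≤ (h + 1) * Fintype.card V * (Fintype.card K + B) := by gcongr

end TotalWeight

/-! ### The moment curve -/

section MomentCurve

variable {K : Type*} [Field K]

lemma inGeneralPosition_moment {ι : Type*} {x : ι → K} (hx : Function.Injective x) (d : ℕ) :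
    InGeneralPosition K fun i (m : Fin d) => x i ^ (m : ℕ) := by
  classical
  intro A hA
  rw [finrank_fin_fun] at hA
  rw [linearIndepOn_finset_iff]
  intro g hg i hi
  have hzero : (fun j => g (A.equivFin.symm j)) = 0 := by
    refine Matrix.eq_zero_of_forall_pow_sum_mul_pow_eq_zero
      (f := fun j : Fin #A => x (A.equivFin.symm j)) ?_ fun m => ?_
    · exact hx.comp (Subtype.val_injective.comp A.equivFin.symm.injective)
    · rw [A.equivFin.symm.sum_comp fun i : A => g i * x i ^ (m : ℕ),
        sum_coe_sort A fun i => g i * x i ^ (m : ℕ)]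
      simpa using congrFun hg (m.castLE hA)
  simpa using congrFun hzero (A.equivFin ⟨i, hi⟩)

/-- The diagonal operator with entries `1, α, α², …`. The orbit of the all-ones vector under it
consists of the points of the moment curve `x ↦ (1, x, x², …)` at the powers of `α`. -/
def geometricDiagonal (α : Kˣ) (d : ℕ) : (Fin d → K) ≃ₗ[K] (Fin d → K) :=
  LinearEquiv.piCongrRight fun m => LinearEquiv.smulOfUnit (α ^ (m : ℕ))

lemma geometricDiagonal_pow_one (α : Kˣ) (d i : ℕ) :
    (geometricDiagonal α d ^ i) 1 = fun m : Fin d => ((α ^ i : Kˣ) : K) ^ (m : ℕ) := by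
  induction i with
  | zero => ext m; simp
  | succ i ih =>
    rw [pow_succ', LinearEquiv.mul_apply, ih]
    ext m
    simp [geometricDiagonal, LinearEquiv.smulOfUnit, Units.smul_def, pow_succ', mul_pow]

lemma inGeneralPosition_geometricDiagonal_pow {α : Kˣ} {Q : ℕ} (hQ : Q ≤ orderOf α) (d : ℕ) :
    InGeneralPosition K fun i : Fin Q => (geometricDiagonal α d ^ (i : ℕ)) 1 := by
  simp only [geometricDiagonal_pow_one]
  refine inGeneralPosition_moment (fun i j hij => Fin.ext ?_) d
  exact pow_injOn_Iio_orderOf (i.2.trans_le hQ) (j.2.trans_le hQ) (Units.ext hij)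

variable (K) [Fintype K] [DecidableEq K]

lemma exists_inGeneralPosition_geometricDiagonal_pow {Q : ℕ} (hQ : Q ≤ Fintype.card Kˣ) (d : ℕ) :
    ∃ α : Kˣ, InGeneralPosition K fun i : Fin Q => (geometricDiagonal α d ^ (i : ℕ)) 1 := by
  obtain ⟨α, hα⟩ := IsCyclic.exists_ofOrder_eq_natCard (α := Kˣ)
  rw [Nat.card_eq_fintype_card] at hα
  exact ⟨α, inGeneralPosition_geometricDiagonal_pow (hQ.trans_eq hα.symm) d⟩

theorem hasDesign_card_pow {h : ℕ} (hh : h ≤ Fintype.card Kˣ) {r : ℝ} (hr : 0 ≤ r)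
    (hrh : 2 * r * h ≤ 1) :
    HasDesign (Fintype.card K ^ h) r (2 * ((h + 1) * Fintype.card Kˣ)) := by
  obtain ⟨α, hα⟩ := exists_inGeneralPosition_geometricDiagonal_pow K hh h
  obtain ⟨φ, hφ⟩ := hα.exists_totalWeight_le (by simp)
  rw [finrank_fin_fun] at hφ
  rw [← Fintype.card_pi_const]
  refine φ.hasDesign ?_
  calc 2 * r * φ.totalWeight ≤ 2 * r * (h * Fintype.card (Fin h → K)) := by
        gcongr
        exact_mod_cast hφ
    _ = 2 * r * h * Fintype.card (Fin h → K) := by ring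
    _ ≤ Fintype.card (Fin h → K) := mul_le_of_le_one_left (Nat.cast_nonneg _) hrh

theorem hasDesign_card_pow_succ {h Q : ℕ} (hQ : h + 1 ≤ Q) (hQK : Q ≤ Fintype.card Kˣ)
    {r ε : ℝ} (hr : 0 ≤ r) (hrε : 2 * r * (h + 1 - ε) ≤ 1)
    (hε : ε * (Fintype.card K + Q.choose h) ≤ Q.choose h) :
    HasDesign (Fintype.card K ^ (h + 1)) r (2 * ((Q + 1) * Fintype.card Kˣ)) := by
  obtain ⟨α, hα⟩ := exists_inGeneralPosition_geometricDiagonal_pow K hQK (h + 1)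
  obtain ⟨φ, hφ⟩ := hα.exists_totalWeight_mul_add_le (finrank_fin_fun K) (by simpa using hQ)
  rw [Fintype.card_fin] at hφ
  rw [← Fintype.card_pi_const]
  set n := Fintype.card (Fin (h + 1) → K)
  have hpos : (0 : ℝ) < Fintype.card K + Q.choose h :=
    add_pos_of_pos_of_nonneg (mod_cast Fintype.card_pos) (Nat.cast_nonneg _)
  have totalWeight_le : (φ.totalWeight : ℝ) ≤ (h + 1 - ε) * n := by
    refine le_of_mul_le_mul_right ?_ hpos
    have hφ' : (φ.totalWeight * (Fintype.card K + Q.choose h) + Q.choose h * n : ℝ) ≤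
        (h + 1) * n * (Fintype.card K + Q.choose h) := mod_cast hφ
    linarith [mul_le_mul_of_nonneg_right hε (Nat.cast_nonneg (α := ℝ) n)]
  refine φ.hasDesign ?_
  calc 2 * r * φ.totalWeight ≤ 2 * r * ((h + 1 - ε) * n) := by gcongr
    _ = 2 * r * (h + 1 - ε) * n := by ring
    _ ≤ n := mul_le_of_le_one_left (Nat.cast_nonneg _) hrε

end MomentCurve

/-! ### Choice of the parameters -/

section Parameters

lemma le_rpow_inv_of_pow_le {x y : ℝ} {h : ℕ} (hh : h ≠ 0) (hx : 0 ≤ x) (hxy : x ^ h ≤ y) :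
    x ≤ y ^ ((1 : ℝ) / h) := by
  rw [one_div, ← Real.pow_rpow_inv_natCast hx hh]
  exact Real.rpow_le_rpow (by positivity) hxy (by positivity)

lemma self_le_choose {n k : ℕ} (hk : k ≠ 0) (hkn : k < n) : n ≤ n.choose k := by
  obtain ⟨k, rfl⟩ := Nat.exists_eq_succ_of_ne_zero hk
  induction n, hkn using Nat.le_induction with
  | base => exact (Nat.choose_succ_self_right _).ge
  | succ n hkn ih =>
    rw [Nat.choose_succ_succ]
    have := Nat.choose_pos (n := n) (k := k) (by omega)
    omega

lemma div_pow_le_choose (h Q : ℕ) : ((Q + 1 - h : ℕ) / h : ℝ) ^ h ≤ Q.choose h := by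
  refine le_trans ?_ (Nat.pow_le_choose (α := ℝ) h Q)
  rw [div_pow]
  gcongr
  exact_mod_cast Nat.factorial_le_pow h

lemma exists_prime_two_mul_le_le_four_mul {ε : ℝ} (hε : 0 < ε) (hε' : 4 * ε ≤ 1) {B : ℕ}
    (hB : B ≠ 0) : ∃ p, p.Prime ∧ B < p ∧ 2 * ε * p ≤ B ∧ B ≤ 4 * ε * p := by
  have hBε : (B : ℝ) ≤ B / (4 * ε) := le_div_self (Nat.cast_nonneg _) (by positivity) hε'
  have hB_le : B ≤ ⌊B / (4 * ε)⌋₊ := Nat.le_floor hBε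
  obtain ⟨p, hp, hp_gt, hp_le⟩ := Nat.exists_prime_lt_and_le_two_mul ⌊B / (4 * ε)⌋₊ (by omega)
  refine ⟨p, hp, hB_le.trans_lt hp_gt, ?_, ?_⟩
  · have : (p : ℝ) ≤ 2 * (B / (4 * ε)) := by
      calc (p : ℝ) ≤ 2 * ⌊B / (4 * ε)⌋₊ := mod_cast hp_le
        _ ≤ 2 * (B / (4 * ε)) := by gcongr; exact Nat.floor_le (by positivity)
    calc 2 * ε * p ≤ 2 * ε * (2 * (B / (4 * ε))) := by gcongr
      _ = B := by field_simp; norm_num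
  · exact (div_le_iff₀' (by positivity)).1 (Nat.lt_of_floor_lt hp_gt).le

theorem exists_gt_hasDesign_of_one_le_four_mul {r ε : ℝ} {h : ℕ} (hh : h ≠ 0) (hr : 0 ≤ r)
    (hrh : 2 * r * h ≤ 1) (hε : 1 ≤ 4 * ε) (n : ℕ) :
    ∃ N > n, ∃ L, HasDesign N r L ∧ (L : ℝ) ≤ 16 * h * (ε * N) ^ ((1 : ℝ) / h) := by
  obtain ⟨p, hp_ge, hp⟩ := Nat.exists_infinite_primes (n + h + 1)
  have : Fact p.Prime := ⟨hp⟩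
  have design := hasDesign_card_pow (ZMod p) (h := h)
    (by rw [ZMod.card_units]; omega) hr hrh
  rw [ZMod.card, ZMod.card_units] at design
  have hε0 : 0 < ε := by linarith
  have hp_le : (p / 4 : ℝ) ≤ (ε * (p ^ h : ℕ)) ^ ((1 : ℝ) / h) := by
    refine le_rpow_inv_of_pow_le hh (by positivity) ?_
    have h4 : (4 : ℝ) ≤ 4 ^ h := le_self_pow₀ (by norm_num) hh
    rw [div_pow, div_le_iff₀ (by positivity)]
    calc (p : ℝ) ^ h ≤ 4 * ε * p ^ h := le_mul_of_one_le_left (by positivity) hε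
      _ = ε * (p ^ h : ℕ) * 4 := by push_cast; ring
      _ ≤ ε * (p ^ h : ℕ) * 4 ^ h := by gcongr
  refine ⟨p ^ h, lt_of_lt_of_le (by omega) (Nat.le_self_pow hh p), _, design, ?_⟩
  have one_le_h : (1 : ℝ) ≤ h := mod_cast Nat.one_le_iff_ne_zero.2 hh
  calc ((2 * ((h + 1) * (p - 1)) : ℕ) : ℝ) ≤ (2 * ((h + 1) * p) : ℕ) := by
        gcongr
        exact Nat.sub_le p 1
    _ = 2 * (h + 1) * p := by push_cast; ring
    _ ≤ 2 * (h + h) * p := by gcongr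
    _ = 16 * h * (p / 4) := by ring
    _ ≤ 16 * h * (ε * (p ^ h : ℕ)) ^ ((1 : ℝ) / h) := by gcongr

theorem exists_gt_hasDesign_of_four_mul_le_one {r ε : ℝ} {h : ℕ} (hh : h ≠ 0) (hr : 0 ≤ r)
    (hrε : 2 * r * (h + 1 - ε) ≤ 1) (hε : 0 < ε) (hε' : 4 * ε ≤ 1) (n : ℕ) :
    ∃ N > n, ∃ L, HasDesign N r L ∧ (L : ℝ) ≤ 16 * h * (ε * N) ^ ((1 : ℝ) / h) := by
  set Q := n + 2 * h
  have le_choose : Q ≤ Q.choose h := self_le_choose hh (by omega)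
  obtain ⟨p, hp, choose_lt, hp_le, le_hp⟩ :=
    exists_prime_two_mul_le_le_four_mul hε hε' (B := Q.choose h) (by omega)
  have : Fact p.Prime := ⟨hp⟩
  have design := hasDesign_card_pow_succ (ZMod p) (h := h) (Q := Q) (by omega)
    (by rw [ZMod.card_units]; omega) hr hrε (by rw [ZMod.card]; nlinarith)
  rw [ZMod.card, ZMod.card_units] at design
  have hs : ((n + h + 1 : ℕ) / h : ℝ) ^ h ≤ 4 * ε * p := by
    refine le_trans ?_ le_hp
    have hQ : Q + 1 - h = n + h + 1 := by omega
    exact hQ ▸ div_pow_le_choose h Q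
  have le_root : (p * ((n + h + 1 : ℕ) / h) / 4 : ℝ) ≤
      (ε * (p ^ (h + 1) : ℕ)) ^ ((1 : ℝ) / h) := by
    refine le_rpow_inv_of_pow_le hh (by positivity) ?_
    have h4 : (4 : ℝ) ≤ 4 ^ h := le_self_pow₀ (by norm_num) hh
    rw [div_pow, div_le_iff₀ (by positivity), mul_pow]
    calc (p : ℝ) ^ h * ((n + h + 1 : ℕ) / h : ℝ) ^ h ≤ p ^ h * (4 * ε * p) := by gcongr
      _ = ε * (p ^ (h + 1) : ℕ) * 4 := by push_cast; ring
      _ ≤ ε * (p ^ (h + 1) : ℕ) * 4 ^ h := by gcongr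
  refine ⟨p ^ (h + 1), lt_of_lt_of_le (by omega) (Nat.le_self_pow h.succ_ne_zero p), _,
    design, ?_⟩
  calc ((2 * ((Q + 1) * (p - 1)) : ℕ) : ℝ) ≤ (2 * ((2 * (n + h + 1)) * p) : ℕ) := by
        gcongr
        · omega
        · exact Nat.sub_le p 1
    _ = 16 * h * (p * ((n + h + 1 : ℕ) / h) / 4) := by
        push_cast
        field_simp
        ring
    _ ≤ 16 * h * (ε * (p ^ (h + 1) : ℕ)) ^ ((1 : ℝ) / h) := by gcongr

end Parameters

/-- **upper bound.** There is a universal constant `C > 0` such that for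
every `r ∈ (0,1/2]`, writing `1/(2r) = h + 1 − ε` with `(h,ε) ∈ ℕ × (0,1]`, there exist
infinitely many `N` admitting an ORN design on `N` nodes that guarantees throughput `r`
and whose maximum latency is at most `C · h · ((εN)^{1/h} + N^{1/(h+1)})`. -/
theorem upper_bound :
    ∃ C : ℝ, 0 < C ∧
      ∀ (r : ℝ), 0 < r → r ≤ 1 / 2 →
      ∀ (h : ℕ) (ε : ℝ), 0 < ε → ε ≤ 1 → 1 / (2 * r) = (h : ℝ) + 1 - ε →
      {N : ℕ | 0 < N ∧ ∃ (T : ℕ) (R : ORNDesign N T),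
        GuaranteesThroughput R r ∧
        ∀ a b t P, R.route a b t P ≠ 0 →
          (P.latency : ℝ) ≤
            C * h * ((ε * N) ^ ((1 : ℝ) / h) + (N : ℝ) ^ ((1 : ℝ) / (h + 1)))}.Infinite := by
  refine ⟨16, by norm_num, fun r hr hr2 h ε hε hε1 heq => Set.infinite_of_forall_exists_gt
    fun n => ?_⟩
  have hrε : 2 * r * (h + 1 - ε) = 1 := by
    rw [← heq]
    field_simp
  have hh : h ≠ 0 := by
    rintro rfl
    rw [Nat.cast_zero] at hrε
    nlinarith
  obtain ⟨N, hN, L, ⟨T, R, hR, hlatency⟩, hL⟩ :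
      ∃ N > n, ∃ L, HasDesign N r L ∧ (L : ℝ) ≤ 16 * h * (ε * N) ^ ((1 : ℝ) / h) := by
    rcases le_total 1 (4 * ε) with hε4 | hε4
    · exact exists_gt_hasDesign_of_one_le_four_mul hh hr.le (by nlinarith) hε4 n
    · exact exists_gt_hasDesign_of_four_mul_le_one hh hr.le hrε.le hε hε4 n
  refine ⟨N, ⟨n.zero_le.trans_lt hN, T, R, hR, fun a b t P hP => ?_⟩, hN⟩
  calc (P.latency : ℝ) ≤ L := mod_cast hlatency a b t P hP
    _ ≤ 16 * h * (ε * N) ^ ((1 : ℝ) / h) := hL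
    _ ≤ 16 * h * ((ε * N) ^ ((1 : ℝ) / h) + (N : ℝ) ^ ((1 : ℝ) / (h + 1))) := by
        gcongr
        exact le_add_of_nonneg_right (by positivity)
end

section
/- Every ORN design on N ≥ 2 nodes that guarantees throughput r satisfies r ≤ 1/2 + 1/(2(N−1)). -/
/-!
Linear programming duality. For an ordered pair `p = (a, b)` of distinct nodes, give the physical
edges leading directly from `a` to `b` weight `2` and all others weight `1`. A path from `a` to `b`
that avoids the direct edges has at least two physical edges, so every such path has weight at
least `2`.

Let `x p e` be the flow across `e` when one unit is sent from `a` to `b` in every timeslot. By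
periodicity the total weight of `x p` on the physical edges of one period is the total weight of the
`T` unit flows starting in that period, hence at least `2 T`. Conversely, an edge `e` is direct for
at most one pair `q`, so its weighted flow, summed over all `p`, is at most `∑ p, x p e + x q e`.
The uniform demand `r / (N - 1)` bounds `∑ p, x p e` by `(N - 1) / r`, and the demand `r` on the
single pair `q` bounds `x q e` by `1 / r`. Summing over the `N T` edges of a period gives
`2 T N (N - 1) ≤ N T (N / r)`.
-/

open scoped ENNReal

section Paths

variable {N T : ℕ} (S : ConnSched N T)

namespace ConnSched

/-- The source and the target of the physical edge `e`, as an ordered pair of nodes. -/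
def ends (e : Fin N × ℤ) : Fin N × Fin N :=
  (e.1, S.perm e.2 e.1)

/-- The dual weight of the physical edge `e` for the ordered pair `p` of nodes: `2` if `e` leads
directly from `p.1` to `p.2`, and `1` otherwise. -/
noncomputable def weight (p : Fin N × Fin N) (e : Fin N × ℤ) : ℝ≥0∞ :=
  1 + if S.ends e = p then 1 else 0

lemma one_le_weight (p : Fin N × Fin N) (e : Fin N × ℤ) : 1 ≤ S.weight p e :=
  le_self_add

lemma weight_ends (e : Fin N × ℤ) : S.weight (S.ends e) e = 2 := by
  simp [weight, one_add_one_eq_two]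

lemma sum_weight_mul_le (A : Finset (Fin N × Fin N)) (x : Fin N × Fin N → ℝ≥0∞)
    (e : Fin N × ℤ) : ∑ p ∈ A, S.weight p e * x p ≤ ∑ p ∈ A, x p + x (S.ends e) := by
  simp only [weight, add_mul, one_mul, ite_mul, zero_mul, Finset.sum_add_distrib,
    Finset.sum_ite_eq]
  gcongr
  split_ifs <;> simp

lemma ends_add_period (i : Fin N) (s : ℤ) : S.ends (i, s + T) = S.ends (i, s) := by
  simp only [ends, S.periodic]

lemma weight_add_period (p : Fin N × Fin N) (i : Fin N) (s : ℤ) :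
    S.weight p (i, s + T) = S.weight p (i, s) := by
  rw [weight, weight, ends_add_period]

end ConnSched

namespace ORNPath

lemma not_usesEdge_nil (v e : Fin N × ℤ) : ¬ (ORNPath.mk v []).usesEdge S e :=
  fun ⟨k, _⟩ => k.elim0

lemma usesEdge_cons {v e : Fin N × ℤ} {b : Bool} {l : List Bool} :
    (ORNPath.mk v (b :: l)).usesEdge S e ↔
      (b = true ∧ v = e) ∨ (ORNPath.mk (stepFn S v b) l).usesEdge S e :=
  Fin.exists_fin_succ

lemma start_time_le_of_usesEdge {P : ORNPath N} {e : Fin N × ℤ} (h : P.usesEdge S e) :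
    P.start.2 ≤ e.2 := by
  obtain ⟨v, l⟩ := P
  induction l generalizing v with
  | nil => exact absurd h (not_usesEdge_nil S v e)
  | cons b l ih =>
    rcases (usesEdge_cons S).1 h with ⟨-, rfl⟩ | h
    · exact le_rfl
    · exact (Int.le_add_one le_rfl).trans (ih _ h)

lemma dest_fst_eq_start_fst {P : ORNPath N} (h : ∀ e, ¬ P.usesEdge S e) :
    (P.dest S).1 = P.start.1 := by
  obtain ⟨v, l⟩ := P
  induction l generalizing v with
  | nil => rfl
  | cons b l ih =>
    cases b with
    | false => exact ih _ fun e he => h e ((usesEdge_cons S).2 (Or.inr he))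
    | true => exact absurd ((usesEdge_cons S).2 (Or.inl ⟨rfl, rfl⟩)) (h v)

lemma nontrivial_edges_or_exists_direct {P : ORNPath N} (h : (P.dest S).1 ≠ P.start.1) :
    {e | P.usesEdge S e}.Nontrivial ∨
      ∃ e, P.usesEdge S e ∧ S.ends e = (P.start.1, (P.dest S).1) := by
  obtain ⟨v, l⟩ := P
  induction l generalizing v with
  | nil => exact absurd rfl h
  | cons b l ih =>
    have of_tail {e : Fin N × ℤ} (he : (ORNPath.mk (stepFn S v b) l).usesEdge S e) :
        (ORNPath.mk v (b :: l)).usesEdge S e := (usesEdge_cons S).2 (Or.inr he)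
    cases b with
    | false =>
      exact (ih _ h).imp (fun hnt => hnt.mono fun _ => of_tail)
        fun ⟨e, he, hends⟩ => ⟨e, of_tail he, hends⟩
    | true =>
      have hv : (ORNPath.mk v (true :: l)).usesEdge S v := (usesEdge_cons S).2 (Or.inl ⟨rfl, rfl⟩)
      by_cases htail : ∃ e, (ORNPath.mk (stepFn S v true) l).usesEdge S e
      · obtain ⟨e, he⟩ := htail
        have hlt : v.2 < e.2 := Int.lt_of_add_one_le (start_time_le_of_usesEdge S he)
        exact Or.inl ⟨v, hv, e, of_tail he, fun hve => hlt.ne (congrArg Prod.snd hve)⟩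
      · have hdest := dest_fst_eq_start_fst S (not_exists.1 htail)
        exact Or.inr ⟨v, hv, Prod.ext rfl hdest.symm⟩

lemma two_le_tsum_weight {P : ORNPath N} (h : (P.dest S).1 ≠ P.start.1) :
    2 ≤ ∑' e : {e // P.usesEdge S e}, S.weight (P.start.1, (P.dest S).1) e := by
  rcases nontrivial_edges_or_exists_direct S h with ⟨e₁, h₁, e₂, h₂, hne⟩ | ⟨e, he, hends⟩
  · let edge₁ : {e // P.usesEdge S e} := ⟨e₁, h₁⟩
    let edge₂ : {e // P.usesEdge S e} := ⟨e₂, h₂⟩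
    have hne' : edge₁ ≠ edge₂ := fun h => hne (congrArg Subtype.val h)
    calc (2 : ℝ≥0∞) = 1 + 1 := one_add_one_eq_two.symm
      _ ≤ ∑ e ∈ {edge₁, edge₂}, S.weight (P.start.1, (P.dest S).1) e := by
        rw [Finset.sum_pair hne']
        exact add_le_add (S.one_le_weight _ _) (S.one_le_weight _ _)
      _ ≤ _ := ENNReal.sum_le_tsum _
  · calc (2 : ℝ≥0∞) = S.weight (P.start.1, (P.dest S).1) e := by rw [← hends, S.weight_ends]
      _ ≤ _ := ENNReal.le_tsum (⟨e, he⟩ : {e // P.usesEdge S e})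

lemma vertexAt_shift_period (P : ORNPath N) (k : ℕ) :
    (P.shift T).vertexAt S k = ((P.vertexAt S k).1, (P.vertexAt S k).2 + T) := by
  refine List.foldl_hom (fun v : Fin N × ℤ => (v.1, v.2 + (T : ℤ))) fun v b => ?_
  simp only [stepFn, S.periodic, add_right_comm]

lemma usesEdge_shift_period (P : ORNPath N) (i : Fin N) (s : ℤ) :
    (P.shift T).usesEdge S (i, s + T) ↔ P.usesEdge S (i, s) := by
  refine exists_congr fun k => and_congr_right fun _ => ?_
  simp only [vertexAt_shift_period, Prod.ext_iff, add_left_inj]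

/-- Translation of paths by `s` timeslots, as a bijection. -/
def shiftEquiv (N : ℕ) (s : ℤ) : ORNPath N ≃ ORNPath N where
  toFun P := P.shift s
  invFun P := P.shift (-s)
  left_inv P := by simp [shift]
  right_inv P := by simp [shift]

end ORNPath

lemma tsum_mul_edgeFlow (w : Fin N × ℤ → ℝ≥0∞) (f : ORNPath N → ℝ≥0∞) :
    ∑' e, w e * edgeFlow S f e = ∑' P, f P * ∑' e : {e // P.usesEdge S e}, w e := by
  classical
  have hflow (e) : w e * edgeFlow S f e = ∑' P, if P.usesEdge S e then f P * w e else 0 := by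
    rw [edgeFlow, mul_comm, ← ENNReal.tsum_mul_right]
    exact tsum_subtype {P : ORNPath N | P.usesEdge S e} fun P => f P * w e
  have hpath (P : ORNPath N) : f P * ∑' e : {e // P.usesEdge S e}, w e =
      ∑' e, if P.usesEdge S e then f P * w e else 0 := by
    rw [← ENNReal.tsum_mul_left]
    exact tsum_subtype {e | P.usesEdge S e} fun e => f P * w e
  simp only [hflow, hpath]
  exact ENNReal.tsum_comm

lemma two_mul_tsum_le_tsum_weight_mul_edgeFlow {p : Fin N × Fin N} (hp : p.1 ≠ p.2)
    {f : ORNPath N → ℝ≥0∞} (hf : ∀ P, f P ≠ 0 → P.start.1 = p.1 ∧ (P.dest S).1 = p.2) :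
    2 * ∑' P, f P ≤ ∑' e, S.weight p e * edgeFlow S f e := by
  rw [tsum_mul_edgeFlow, mul_comm, ← ENNReal.tsum_mul_right]
  refine ENNReal.tsum_le_tsum fun P => ?_
  rcases eq_or_ne (f P) 0 with hP | hP
  · simp [hP]
  obtain ⟨hstart, hdest⟩ := hf P hP
  obtain rfl : p = (P.start.1, (P.dest S).1) := Prod.ext hstart.symm hdest.symm
  gcongr
  exact ORNPath.two_le_tsum_weight S hp.symm

end Paths

section Periodicity

variable {T : ℕ}

lemma tsum_int_eq_sum_range_tsum (hT : 0 < T) (g : ℤ → ℝ≥0∞) :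
    ∑' s, g s = ∑ j ∈ Finset.range T, ∑' k : ℤ, g (j + k * T) := by
  have : NeZero T := ⟨hT.ne'⟩
  rw [← (Int.divModEquiv T).symm.tsum_eq, ENNReal.tsum_prod', ENNReal.tsum_comm, tsum_fintype,
    Finset.sum_range]
  simp [Int.divModEquiv, add_comm]

lemma sum_range_tsum_comm_of_periodic (hT : 0 < T) {F : ℤ → ℤ → ℝ≥0∞}
    (hF : ∀ t s, F (t + T) (s + T) = F t s) :
    ∑ t ∈ Finset.range T, ∑' s, F t s = ∑ s ∈ Finset.range T, ∑' t, F t s := by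
  have hshift (t s k : ℤ) : F (t + -k * T) s = F t (s + k * T) := by
    have hper : Function.Periodic (fun u => F (t + -k * T + u) (s + u)) T := fun u => by
      simpa only [add_assoc] using hF (t + -k * T + u) (s + u)
    simpa using (hper.int_mul_eq k).symm
  have hcell (t s : ℤ) : ∑' k : ℤ, F t (s + k * T) = ∑' k : ℤ, F (t + k * T) s := by
    simp only [← hshift]
    exact (Equiv.neg ℤ).tsum_eq fun k => F (t + k * T) s
  simp only [tsum_int_eq_sum_range_tsum hT fun s => F _ s,
    tsum_int_eq_sum_range_tsum hT fun t => F t _, hcell]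
  exact Finset.sum_comm

end Periodicity

section Designs

variable {N T : ℕ} {R : ORNDesign N T} {r : ℝ}

namespace ORNDesign

lemma edgeFlow_route_add_period (R : ORNDesign N T) (a b i : Fin N) (t s : ℤ) :
    edgeFlow R.sched (R.route a b (t + T)) (i, s + T) =
      edgeFlow R.sched (R.route a b t) (i, s) := by
  let shiftPaths : {P : ORNPath N // P.usesEdge R.sched (i, s)} ≃
      {P : ORNPath N // P.usesEdge R.sched (i, s + T)} :=
    (ORNPath.shiftEquiv N T).subtypeEquiv fun P =>
      (ORNPath.usesEdge_shift_period R.sched P i s).symm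
  rw [edgeFlow, ← shiftPaths.tsum_eq]
  exact tsum_congr fun P => R.route_periodic a b t P

/-- The flow across the edge `e` when one unit is sent from `p.1` to `p.2` in every timeslot. -/
noncomputable def pairFlow (R : ORNDesign N T) (p : Fin N × Fin N) (e : Fin N × ℤ) : ℝ≥0∞ :=
  ∑' t, edgeFlow R.sched (R.route p.1 p.2 t) e

lemma edgeFlow_inducedFlow_const (R : ORNDesign N T) (M : Fin N → Fin N → ℝ) (e : Fin N × ℤ) :
    edgeFlow R.sched (inducedFlow R fun _ => M) e =
      ∑ p, ENNReal.ofReal (M p.1 p.2) * R.pairFlow p e := by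
  simp only [edgeFlow, inducedFlow, pairFlow]
  rw [ENNReal.tsum_comm, ← (Equiv.prodAssoc _ _ _).tsum_eq, ENNReal.tsum_prod', tsum_fintype]
  simp only [Equiv.prodAssoc_apply, ENNReal.tsum_mul_left]

lemma two_mul_period_le_sum_weight_mul_pairFlow (R : ORNDesign N T) {p : Fin N × Fin N}
    (hp : p.1 ≠ p.2) :
    (2 * T : ℝ≥0∞) ≤
      ∑ s ∈ Finset.range T, ∑ i, R.sched.weight p (i, s) * R.pairFlow p (i, s) := by
  let load (t s : ℤ) : ℝ≥0∞ :=
    ∑ i, R.sched.weight p (i, s) * edgeFlow R.sched (R.route p.1 p.2 t) (i, s)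
  have hload (t s : ℤ) : load (t + T) (s + T) = load t s := by
    simp only [load, R.sched.weight_add_period, edgeFlow_route_add_period]
  have two_le (t : ℤ) : 2 ≤ ∑' s, load t s := by
    have h := two_mul_tsum_le_tsum_weight_mul_edgeFlow R.sched hp (f := R.route p.1 p.2 t)
      fun P hP => (R.route_support _ _ t P hP).imp_left (congrArg Prod.fst)
    rw [R.route_unit, mul_one, ENNReal.tsum_prod', ENNReal.tsum_comm] at h
    simpa only [load, tsum_fintype] using h
  calc (2 * T : ℝ≥0∞) = ∑ t ∈ Finset.range T, 2 := by simp [mul_comm]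
    _ ≤ ∑ t ∈ Finset.range T, ∑' s, load t s := Finset.sum_le_sum fun t _ => two_le t
    _ = ∑ s ∈ Finset.range T, ∑' t, load t s :=
      sum_range_tsum_comm_of_periodic R.sched.Tpos hload
    _ = _ := by
      simp only [load, pairFlow, ← ENNReal.tsum_mul_left,
        Summable.tsum_finsetSum fun _ _ => ENNReal.summable]

end ORNDesign

namespace RequestsThroughput

lemma single (hr0 : 0 ≤ r) (p : Fin N × Fin N) :
    RequestsThroughput (fun _ a b => if a = p.1 ∧ b = p.2 then r else 0) r := by
  refine ⟨fun _ a b => ?_, fun _ a => ?_, fun _ b => ?_⟩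
  · dsimp only
    positivity
  · by_cases ha : a = p.1 <;> simp [ha, hr0]
  · by_cases hb : b = p.2 <;> simp [hb, hr0]

lemma uniform (hr0 : 0 ≤ r) :
    RequestsThroughput (fun _ (a b : Fin N) => if a ≠ b then r else 0) ((N - 1) * r) := by
  have hrow (a : Fin N) : ∑ b, (if a ≠ b then r else 0) = (N - 1) * r := by
    rw [← Finset.sum_filter, Finset.sum_const, Finset.filter_ne,
      Finset.card_erase_of_mem (Finset.mem_univ a), Finset.card_univ, Fintype.card_fin,
      nsmul_eq_mul, Nat.cast_pred a.pos]
  refine ⟨fun _ a b => ?_, fun _ a => (hrow a).le, fun _ b => ?_⟩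
  · dsimp only
    positivity
  · simpa only [ne_comm] using (hrow b).le

end RequestsThroughput

namespace GuaranteesThroughput

lemma sum_mul_pairFlow_le_one (hr : GuaranteesThroughput R r) {M : Fin N → Fin N → ℝ}
    (hM : RequestsThroughput (fun _ => M) r) (e : Fin N × ℤ) :
    ∑ p, ENNReal.ofReal (M p.1 p.2) * R.pairFlow p e ≤ 1 := by
  rw [← R.edgeFlow_inducedFlow_const]
  exact hr _ hM e

lemma mul_pairFlow_le_one (hr : GuaranteesThroughput R r) (hr0 : 0 ≤ r) (p : Fin N × Fin N)
    (e : Fin N × ℤ) : ENNReal.ofReal r * R.pairFlow p e ≤ 1 := by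
  have h := hr.sum_mul_pairFlow_le_one (.single hr0 p) e
  simpa only [← Prod.ext_iff, apply_ite ENNReal.ofReal, ENNReal.ofReal_zero, ite_mul, zero_mul,
    Finset.sum_ite_eq', Finset.mem_univ, if_true] using h

lemma mul_sum_offDiag_pairFlow_le_one (hr : GuaranteesThroughput R ((N - 1) * r)) (hr0 : 0 ≤ r)
    (e : Fin N × ℤ) :
    ENNReal.ofReal r * ∑ p ∈ Finset.univ.offDiag, R.pairFlow p e ≤ 1 := by
  have h := hr.sum_mul_pairFlow_le_one (.uniform hr0) e
  have hfilter : (Finset.univ : Finset (Fin N)).offDiag =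
      (Finset.univ : Finset (Fin N × Fin N)).filter fun p => p.1 ≠ p.2 := by
    ext p
    simp
  simpa only [hfilter, apply_ite ENNReal.ofReal, ENNReal.ofReal_zero, ite_mul, zero_mul,
    ← Finset.sum_filter, ← Finset.mul_sum] using h

lemma mul_sum_weight_mul_pairFlow_le (hN : 1 < N) (hr : GuaranteesThroughput R r) (hr0 : 0 ≤ r)
    (e : Fin N × ℤ) :
    ENNReal.ofReal r * ∑ p ∈ Finset.univ.offDiag, R.sched.weight p e * R.pairFlow p e ≤ N := by
  have hN1 : (0 : ℝ) < N - 1 := sub_pos.2 (Nat.one_lt_cast.2 hN)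
  have hoffDiag : ENNReal.ofReal r * ∑ p ∈ Finset.univ.offDiag, R.pairFlow p e ≤
      ENNReal.ofReal (N - 1) := by
    have hr' : (N - 1) * (r / (N - 1)) = r := mul_div_cancel₀ r hN1.ne'
    rw [← hr', ENNReal.ofReal_mul hN1.le, mul_assoc]
    exact mul_le_of_le_one_right'
      (mul_sum_offDiag_pairFlow_le_one (hr'.symm ▸ hr) (by positivity) e)
  calc _ ≤ ENNReal.ofReal r *
          (∑ p ∈ Finset.univ.offDiag, R.pairFlow p e + R.pairFlow (R.sched.ends e) e) := by
        gcongr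
        exact R.sched.sum_weight_mul_le ..
    _ ≤ ENNReal.ofReal (N - 1) + 1 := by
        rw [mul_add]
        exact add_le_add hoffDiag (hr.mul_pairFlow_le_one hr0 _ e)
    _ = N := by
        rw [← ENNReal.ofReal_one, ← ENNReal.ofReal_add hN1.le one_pos.le, sub_add_cancel,
          ENNReal.ofReal_natCast]

lemma mul_card_offDiag_mul_period_le (hN : 1 < N) (hr : GuaranteesThroughput R r) (hr0 : 0 ≤ r) :
    ENNReal.ofReal r * (N * (N - 1) * (2 * T) : ℕ) ≤ (T * (N * N) : ℕ) := by
  have hcard : (Finset.univ : Finset (Fin N)).offDiag.card = N * (N - 1) := by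
    rw [Finset.offDiag_card, Finset.card_fin, Nat.mul_sub_one]
  calc ENNReal.ofReal r * (N * (N - 1) * (2 * T) : ℕ)
      = ENNReal.ofReal r * ∑ p ∈ (Finset.univ : Finset (Fin N)).offDiag, (2 * T : ℝ≥0∞) := by
        rw [Finset.sum_const, hcard, nsmul_eq_mul]
        norm_cast
    _ ≤ ENNReal.ofReal r * ∑ p ∈ Finset.univ.offDiag,
          ∑ s ∈ Finset.range T, ∑ i, R.sched.weight p (i, s) * R.pairFlow p (i, s) := by
        gcongr with p hp
        exact R.two_mul_period_le_sum_weight_mul_pairFlow (Finset.mem_offDiag.1 hp).2.2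
    _ = ∑ s ∈ Finset.range T, ∑ i, ENNReal.ofReal r *
          ∑ p ∈ Finset.univ.offDiag, R.sched.weight p (i, s) * R.pairFlow p (i, s) := by
        rw [Finset.sum_comm, Finset.mul_sum]
        refine Finset.sum_congr rfl fun s _ => ?_
        rw [Finset.sum_comm, Finset.mul_sum]
    _ ≤ ∑ _s ∈ Finset.range T, ∑ _i : Fin N, (N : ℝ≥0∞) := by
        gcongr with s _ i _
        exact hr.mul_sum_weight_mul_pairFlow_le hN hr0 (i, s)
    _ = (T * (N * N) : ℕ) := by simp

lemma mul_two_mul_sub_one_le (hN : 1 < N) (hr : GuaranteesThroughput R r) (hr0 : 0 ≤ r) :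
    r * (2 * (N - 1)) ≤ N := by
  have hT : 0 < T := R.sched.Tpos
  have h := hr.mul_card_offDiag_mul_period_le hN hr0
  rw [← ENNReal.ofReal_natCast, ← ENNReal.ofReal_natCast, ← ENNReal.ofReal_mul hr0,
    ENNReal.ofReal_le_ofReal_iff (by positivity)] at h
  push_cast [Nat.cast_pred (zero_lt_one.trans hN)] at h
  have hTN : (0 : ℝ) < T * N := by positivity
  exact le_of_mul_le_mul_left (by linarith) hTN

end GuaranteesThroughput

end Designs

/-- Every ORN design on `N ≥ 2` nodes that guarantees throughput `r`
satisfies `r ≤ 1/2 + 1/(2(N−1))`. -/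
theorem throughput_at_most_half {N T : ℕ} (hN : 2 ≤ N) (R : ORNDesign N T) (r : ℝ)
    (hr : GuaranteesThroughput R r) :
    r ≤ 1 / 2 + 1 / (2 * ((N : ℝ) - 1)) := by
  have hN1 : (0 : ℝ) < N - 1 := sub_pos.2 (Nat.one_lt_cast.2 hN)
  rcases le_total r 0 with hr0 | hr0
  · exact hr0.trans (by positivity)
  calc r ≤ N / (2 * (N - 1)) :=
        (le_div_iff₀ (by positivity)).2 (hr.mul_two_mul_sub_one_le hN hr0)
    _ = 1 / 2 + 1 / (2 * (N - 1)) := by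
        field_simp
        ring
end

section
/- Let N ≥ 1 be an integer, r ≥ 0 a real number, and D an N×N matrix with nonnegative real entries such that every row sum and every column sum of D is at most r. Then there exists an N×N matrix D′ with nonnegative real entries such that D′_{ij} ≥ D_{ij} for all i, j, and every row sum and every column sum of D′ equals exactly r. -/
/-!
The row deficits `a i` and the column deficits `b j` of `D` are nonnegative and have the same
total `S`, so adding the rank-one matrix `a i * b j / S` raises row `i` by exactly `a i` and
column `j` by exactly `b j`.
-/

variable {K ι m n : Type*} [Semifield K] [LinearOrder K] [IsStrictOrderedRing K]

-- If the sum is zero, then so is `f i`, and `x / 0 = 0` gives the right value.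
theorem mul_sum_div_sum_cancel_of_nonneg {s : Finset ι} {f : ι → K} (hf : ∀ i ∈ s, 0 ≤ f i)
    {i : ι} (hi : i ∈ s) : f i * (∑ k ∈ s, f k) / ∑ k ∈ s, f k = f i :=
  mul_div_cancel_of_imp fun hsum ↦ (Finset.sum_eq_zero_iff_of_nonneg hf).1 hsum i hi

variable [Fintype m] [Fintype n]

theorem exists_nonneg_row_sum_eq_col_sum_eq {a : m → K} {b : n → K} (ha : ∀ i, 0 ≤ a i)
    (hb : ∀ j, 0 ≤ b j) (hab : ∑ i, a i = ∑ j, b j) :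
    ∃ E : m → n → K,
      (∀ i j, 0 ≤ E i j) ∧ (∀ i, ∑ j, E i j = a i) ∧ (∀ j, ∑ i, E i j = b j) := by
  refine ⟨fun i j ↦ a i * b j / ∑ k, a k, fun i j ↦ ?nonneg, fun i ↦ ?row, fun j ↦ ?col⟩
  case nonneg =>
    exact div_nonneg (mul_nonneg (ha i) (hb j)) (Finset.sum_nonneg fun k _ ↦ ha k)
  case row =>
    calc
      ∑ j, a i * b j / ∑ k, a k = a i * (∑ k, a k) / ∑ k, a k := by
        rw [← Finset.sum_div, ← Finset.mul_sum, hab]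
      _ = a i := mul_sum_div_sum_cancel_of_nonneg (fun k _ ↦ ha k) (Finset.mem_univ i)
  case col =>
    calc
      ∑ i, a i * b j / ∑ k, a k = b j * (∑ k, b k) / ∑ k, b k := by
        rw [← Finset.sum_div, ← Finset.sum_mul, hab, mul_comm]
      _ = b j := mul_sum_div_sum_cancel_of_nonneg (fun k _ ↦ hb k) (Finset.mem_univ j)

theorem demand_inflation_general [ExistsAddOfLE K] {D : m → n → K} {u : m → K} {v : n → K}
    (hrow : ∀ i, ∑ j, D i j ≤ u i) (hcol : ∀ j, ∑ i, D i j ≤ v j)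
    (huv : ∑ i, u i = ∑ j, v j) :
    ∃ D' : m → n → K,
      (∀ i j, D i j ≤ D' i j) ∧ (∀ i, ∑ j, D' i j = u i) ∧ (∀ j, ∑ i, D' i j = v j) := by
  choose a ha hau using fun i ↦ exists_nonneg_add_of_le (hrow i)
  choose b hb hbv using fun j ↦ exists_nonneg_add_of_le (hcol j)
  have hab : ∑ i, a i = ∑ j, b j := by
    refine add_left_cancel (a := ∑ i, ∑ j, D i j) ?_
    calc
      ∑ i, ∑ j, D i j + ∑ i, a i = ∑ i, u i := by simp only [← Finset.sum_add_distrib, hau]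
      _ = ∑ j, v j := huv
      _ = ∑ j, ∑ i, D i j + ∑ j, b j := by simp only [← Finset.sum_add_distrib, hbv]
      _ = ∑ i, ∑ j, D i j + ∑ j, b j := by rw [Finset.sum_comm]
  obtain ⟨E, hE, hE_row, hE_col⟩ := exists_nonneg_row_sum_eq_col_sum_eq ha hb hab
  refine ⟨fun i j ↦ D i j + E i j, fun i j ↦ le_add_of_nonneg_right (hE i j),
    fun i ↦ ?_, fun j ↦ ?_⟩
  · rw [Finset.sum_add_distrib, hE_row, hau]
  · rw [Finset.sum_add_distrib, hE_col, hbv]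

/-- **demand inflation.** Let `N ≥ 1`, `r ≥ 0`, and let `D` be an `N×N`
matrix with nonnegative real entries all of whose row and column sums are at most `r`.
Then there is an `N×N` matrix `D′` with nonnegative entries, entrywise at least `D`,
all of whose row and column sums equal exactly `r`. -/
theorem demand_inflation (N : ℕ) (hN : 1 ≤ N) (r : ℝ) (hr : 0 ≤ r)
    (D : Fin N → Fin N → ℝ) (hD : ∀ i j, 0 ≤ D i j)
    (hrow : ∀ i, ∑ j, D i j ≤ r) (hcol : ∀ j, ∑ i, D i j ≤ r) :
    ∃ D' : Fin N → Fin N → ℝ,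
      (∀ i j, 0 ≤ D' i j) ∧ (∀ i j, D i j ≤ D' i j) ∧
      (∀ i, ∑ j, D' i j = r) ∧ (∀ j, ∑ i, D' i j = r) := by
  obtain ⟨D', hle, hsums⟩ := demand_inflation_general hrow hcol rfl
  exact ⟨D', fun i j ↦ (hD i j).trans (hle i j), hle, hsums⟩
end
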